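/- For every m ≥ 2 and every n ≥ 0, the dihedral group of order 2m admits no free continuous action on the sphere S^n: there is no group homomorphism from the dihedral group of order 2m to the homeomorphism group of S^n such that every non-identity element acts without fixed points. -/

import Mathlib

/-!
The dihedral group of order `2m` is the Klein four-group for `m = 2`, and contains an involution that is
not central for `m ≥ 3`. Smith and Milnor, respectively, showed that neither can happen for a group
acting freely on a sphere. Both arguments are carried out with mod-2 Vietoris chains: ordered simplices
whose vertices are `ε`-close, with `ε` allowed to shrink at every step.

*Homology of the sphere.* Cycles of dimension below `n` that are fine enough bound finely, and the top
homology has at most two elements. This is the predicate `SphProp`; it is proved in `sphProp_Sd` by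
induction on the dimension, cutting a cycle along the equator and contracting the two caps.

*Dimension of the quotient.* The quotient of `Sⁿ` by a free action has dimension `n`, so that a product
of `n + 1` degree-one classes coming from characters `κᵢ : G → ℤ/2` vanishes. In geometric terms, there is
a nowhere zero equivariant map from `Sⁿ` to the sum of the `n + 1` sign representations, because nowhere
zero maps `Sⁿ → ℝⁿ⁺¹` are dense (`exists_equivariant`). The signs of its coordinates are 0-cochains
`sᵢ` with `sᵢ (g x) = κᵢ g + sᵢ x`, and some `sᵢ` is constant on every fine simplex; hence the cochain
`δs₀ ∪ ⋯ ∪ δsₙ` vanishes on fine chains (`exists_cup_vanishing`). A top-dimensional cycle on which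
`s₀ ∪ δs₁ ∪ ⋯ ∪ δsₙ` takes the value `1` therefore does not bound.

*A chain that detects an involution.* For an involution `T`, fill in turn `∂ e_{L+1} = e_L + T e_L`,
starting with a vertex `e₀`. If `κ T = 1`, the product of the coboundaries of `L` cochains with
character `κ` is `1` on `e_L`, so that the cycle `eₙ + T eₙ` does not bound.

*Klein four-group* (`no_klein`). For `S` commuting with `T`, there are companion chains
`d_L` with `∂ d_{L+1} = d_L + T d_L + e_L + S e_L`. In the top dimension this gives two cycles which, by
taking the values of the products for `κⁿ⁺¹` and `κ' κⁿ`, are linearly independent in homology. But the top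
homology has at most two elements.

*Milnor's argument* (`no_noncommuting`). Suppose that `g T ≠ T g`. By freeness `g T x ≠ T g x` for all
`x`, so the map `F x = (g x, g T x)` takes values in the complement of the graph of `T`, a space
homotopy equivalent to `Sⁿ` and stable under the swap of factors. There `F (eₙ + T eₙ)` can be written
as `y + swap y` with `y` a cycle. Projecting to the first factor, `g (eₙ + T eₙ)` is the sum of the two
projections of `y`. On the complement of the graph the first projection is homotopic to the second one
followed by the homeomorphism `x ↦ -T x`, so either both projections of `y` bound or neither does, and
in both cases their sum bounds. Applying `g⁻¹`, the cycle `eₙ + T eₙ` bounds, a contradiction.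
-/

/-- The group of self-homeomorphisms of a topological space,
with `(f * g) x = f (g x)`. -/
instance homeomorphGroup {X : Type*} [TopologicalSpace X] : Group (X ≃ₜ X) where
  mul f g := g.trans f
  one := Homeomorph.refl X
  inv := Homeomorph.symm
  mul_assoc _ _ _ := Homeomorph.ext fun _ => rfl
  one_mul _ := Homeomorph.ext fun _ => rfl
  mul_one _ := Homeomorph.ext fun _ => rfl
  inv_mul_cancel f := Homeomorph.ext fun x => f.symm_apply_apply x

/-! ### Ordered chains modulo 2 -/

/-- Mod-2 ordered chains on a set: a generator is a list of points, a list of length `L` being an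
ordered simplex of dimension `L - 1`. Repeated vertices are allowed, and the empty list is kept, so
the complex is augmented and its homology is reduced. The topology enters through `Fine`. -/
abbrev Ch (X : Type*) := List X →₀ ZMod 2

namespace Ch

variable {X Y Z : Type*}

/-- The cone operator: adjoin `v` as first vertex to every simplex. -/
noncomputable def cons (v : X) : Ch X →ₗ[ZMod 2] Ch X :=
  Finsupp.lmapDomain (ZMod 2) (ZMod 2) (List.cons v)

/-- The boundary of a simplex, by recursion on the first vertex. -/
noncomputable def bdL : List X → Ch X
  | [] => 0
  | v :: l => Finsupp.single l 1 + cons v (bdL l)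

/-- The mod-2 boundary operator; on a single vertex it is the augmentation. -/
noncomputable def bd : Ch X →ₗ[ZMod 2] Ch X := Finsupp.linearCombination (ZMod 2) bdL

/-- The chain map induced by a map of vertices. -/
noncomputable def push (f : X → Y) : Ch X →ₗ[ZMod 2] Ch Y :=
  Finsupp.lmapDomain (ZMod 2) (ZMod 2) (List.map f)

/-- The prism on a simplex: the sum of the simplices
`f v₀, …, f vᵢ, g vᵢ, …, g v_d`. -/
noncomputable def prismL (f g : X → Y) : List X → Ch Y
  | [] => 0
  | v :: l => Finsupp.single (f v :: g v :: l.map g) 1 + cons (f v) (prismL f g l)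

/-- The prism operator, a chain homotopy between `push f` and `push g` (see `bd_prism`). -/
noncomputable def prism (f g : X → Y) : Ch X →ₗ[ZMod 2] Ch Y :=
  Finsupp.linearCombination (ZMod 2) (prismL f g)

/-- The product `s ∪ u` of a 0-cochain `s` and a cochain `u`: the value of `u` on a simplex is
multiplied by the value of `s` at the first vertex. The value on the empty simplex is set to `0`. -/
noncomputable def weight (s : X → ZMod 2) (u : Ch X →ₗ[ZMod 2] ZMod 2) : Ch X →ₗ[ZMod 2] ZMod 2 :=
  Finsupp.linearCombination (ZMod 2) fun l => match l with
    | [] => 0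
    | v :: tail => s v * u (Finsupp.single (v :: tail) 1)

/-- The cochain `δs₁ ∪ ⋯ ∪ δs_k` attached to 0-cochains `s₁, …, s_k`, written recursively as the
coboundary of `s₁ ∪ (δs₂ ∪ ⋯ ∪ δs_k)`. For the empty list it is the cochain that is `1` on every vertex.
It lives in degree `k`, that is, on lists of length `k + 1`. -/
noncomputable def cup : List (X → ZMod 2) → (Ch X →ₗ[ZMod 2] ZMod 2)
  | [] => Finsupp.linearCombination (ZMod 2) fun l => if l.length = 1 then 1 else 0
  | s :: ss => weight s (cup ss) ∘ₗ bd

lemma hom_ext {M : Type*} [AddCommGroup M] [Module (ZMod 2) M] {φ ψ : Ch X →ₗ[ZMod 2] M}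
    (h : ∀ l, φ (Finsupp.single l 1) = ψ (Finsupp.single l 1)) : φ = ψ :=
  Finsupp.lhom_ext' fun l => LinearMap.ext_ring (h l)

@[simp] lemma cons_single (v : X) (l : List X) :
    cons v (Finsupp.single l 1) = Finsupp.single (v :: l) 1 := by simp [cons]

@[simp] lemma bd_single (l : List X) : bd (Finsupp.single l 1) = bdL l := by simp [bd]

@[simp] lemma push_single (f : X → Y) (l : List X) :
    push f (Finsupp.single l 1) = Finsupp.single (l.map f) 1 := by simp [push]

@[simp] lemma prism_single (f g : X → Y) (l : List X) :
    prism f g (Finsupp.single l 1) = prismL f g l := by simp [prism]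

lemma bd_cons (v : X) (z : Ch X) : bd (cons v z) = z + cons v (bd z) := by
  have : bd ∘ₗ cons v = LinearMap.id + cons v ∘ₗ bd := hom_ext fun l => by simp [bdL]
  exact LinearMap.congr_fun this z

lemma bd_bdL (l : List X) : bd (bdL l) = 0 := by
  induction l with
  | nil => simp [bdL]
  | cons v l ih => simp [bdL, bd_cons, ih, ZModModule.add_self]

@[simp] lemma bd_bd (z : Ch X) : bd (bd z) = 0 := by
  have : bd ∘ₗ bd = (0 : Ch X →ₗ[ZMod 2] Ch X) := hom_ext fun l => by simp [bd_bdL]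
  exact LinearMap.congr_fun this z

lemma push_cons (f : X → Y) (v : X) (z : Ch X) : push f (cons v z) = cons (f v) (push f z) := by
  have : push f ∘ₗ cons v = cons (f v) ∘ₗ push f := hom_ext fun l => by simp
  exact LinearMap.congr_fun this z

lemma bdL_map (f : X → Y) (l : List X) : bdL (l.map f) = push f (bdL l) := by
  induction l with
  | nil => simp [bdL]
  | cons v l ih => simp [bdL, ih, push_cons]

lemma bd_push (f : X → Y) (z : Ch X) : bd (push f z) = push f (bd z) := by
  have : bd ∘ₗ push f = push f ∘ₗ bd := hom_ext fun l => by simp [bdL_map]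
  exact LinearMap.congr_fun this z

lemma push_push (f : X → Y) (g : Y → Z) (z : Ch X) : push g (push f z) = push (g ∘ f) z := by
  have : push g ∘ₗ push f = push (g ∘ f) := hom_ext fun l => by simp
  exact LinearMap.congr_fun this z

lemma push_id (z : Ch X) : push (id : X → X) z = z := by
  have : push (id : X → X) = LinearMap.id := hom_ext fun l => by simp
  exact LinearMap.congr_fun this z

lemma push_push_self (T : X → X) (hT : ∀ x, T (T x) = x) (z : Ch X) : push T (push T z) = z := by
  rw [push_push, show T ∘ T = id from funext hT, push_id]

lemma prism_cons (f g : X → Y) (v : X) (z : Ch X) :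
    prism f g (cons v z) = cons (f v) (cons (g v) (push g z)) + cons (f v) (prism f g z) := by
  have : prism f g ∘ₗ cons v =
      cons (f v) ∘ₗ cons (g v) ∘ₗ push g + cons (f v) ∘ₗ prism f g :=
    hom_ext fun l => by simp [prismL]
  exact LinearMap.congr_fun this z

lemma bd_prismL (f g : X → Y) (l : List X) :
    bd (prismL f g l) + prism f g (bdL l) =
      Finsupp.single (l.map f) 1 + Finsupp.single (l.map g) 1 := by
  induction l with
  | nil => simp [bdL, prismL, ZModModule.add_self]
  | cons v l ih =>
    have ih' := congrArg (cons (f v)) ih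
    simp only [map_add, cons_single] at ih'
    simp only [bdL, prismL, map_add, bd_cons, prism_cons, bd_single, prism_single, bdL_map,
      cons_single, List.map_cons]
    have e1 := ZModModule.add_self (prismL f g l)
    have e2 := ZModModule.add_self (cons (f v) (cons (g v) (push g (bdL l))))
    have e3 := ZModModule.add_self (Finsupp.single (f v :: l.map g) (1 : ZMod 2))
    linear_combination (norm := module) ih' + e1 + e2 + e3

lemma bd_prism (f g : X → Y) (z : Ch X) :
    bd (prism f g z) + prism f g (bd z) = push f z + push g z := by
  have : bd ∘ₗ prism f g + prism f g ∘ₗ bd = push f + push g :=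
    hom_ext fun l => by simp [bd_prismL]
  exact LinearMap.congr_fun this z

/-! ### Cochains and their products -/

lemma weight_cons (s : X → ZMod 2) (u : Ch X →ₗ[ZMod 2] ZMod 2) (v : X) (z : Ch X) :
    weight s u (cons v z) = s v * u (cons v z) := by
  have : weight s u ∘ₗ cons v = s v • (u ∘ₗ cons v) := hom_ext fun l => by simp [weight]
  exact LinearMap.congr_fun this z

lemma cup_bd (ss : List (X → ZMod 2)) (z : Ch X) : cup ss (bd z) = 0 := by
  cases ss with
  | cons s ss => simp [cup]
  | nil =>
    have : cup [] ∘ₗ bd = (0 : Ch X →ₗ[ZMod 2] ZMod 2) := hom_ext fun l => by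
      have key : ∀ (v : X) (z : Ch X), cup [] (cons v z) = z [] := fun v z => by
        have : cup [] ∘ₗ cons v = (Finsupp.lapply [] : Ch X →ₗ[ZMod 2] ZMod 2) :=
          hom_ext fun l => by cases l <;> simp [cup]
        exact LinearMap.congr_fun this z
      rcases l with _ | ⟨v, l⟩
      · simp [bdL]
      rcases l with _ | ⟨w, l⟩
      · simp [bdL, cup]
      rcases l with _ | ⟨w, l⟩
      · simp only [bdL, LinearMap.comp_apply, bd_single, map_add, cons_single, map_zero]
        simp [cup, CharTwo.add_self_eq_zero]
      · have h2 : ∀ (v : X) (z : Ch X), (cons v z) [] = 0 := fun v z => by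
          have : (Finsupp.lapply [] : Ch X →ₗ[ZMod 2] ZMod 2) ∘ₗ cons v = 0 :=
            hom_ext fun l => by simp
          exact LinearMap.congr_fun this z
        simp only [bdL, LinearMap.comp_apply, bd_single, map_add, cons_single, key, h2]
        simp [cup]
    exact LinearMap.congr_fun this z

lemma cup_nil_list (ss : List (X → ZMod 2)) : cup ss (Finsupp.single [] 1) = 0 := by
  cases ss <;> simp [cup, bdL]

lemma weight_push (s : X → ZMod 2) (u : Ch X →ₗ[ZMod 2] ZMod 2) (T : X → X) (c : ZMod 2)
    (hs : ∀ x, s (T x) = c + s x) (hu : ∀ z, u (push T z) = u z)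
    (hu0 : u (Finsupp.single [] 1) = 0) (z : Ch X) :
    weight s u (push T z) = c * u z + weight s u z := by
  have : weight s u ∘ₗ push T = c • u + weight s u := hom_ext fun l => by
    rcases l with _ | ⟨v, l⟩
    · simp [weight, hu0]
    · have := hu (Finsupp.single (v :: l) 1)
      simp only [push_single, List.map_cons] at this
      simp [weight, hs, this, add_mul]
  exact LinearMap.congr_fun this z

/-- If each factor changes by a constant under `T`, its coboundary is `T`-invariant. -/
lemma cup_push (T : X → X) (ss : List (X → ZMod 2))
    (hs : ∀ s ∈ ss, ∃ c, ∀ x, s (T x) = c + s x) (z : Ch X) :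
    cup ss (push T z) = cup ss z := by
  induction ss generalizing z with
  | nil =>
    have : cup [] ∘ₗ push T = (cup [] : Ch X →ₗ[ZMod 2] ZMod 2) := hom_ext fun l => by simp [cup]
    exact LinearMap.congr_fun this z
  | cons s ss ih =>
    obtain ⟨c, hc⟩ := hs s (by simp)
    simp only [cup, LinearMap.comp_apply, bd_push]
    rw [weight_push s (cup ss) T c hc (ih fun s hs' => hs s (by simp [hs'])) (cup_nil_list ss),
      cup_bd]
    simp

lemma cup_cons_cons (s : X → ZMod 2) (ss : List (X → ZMod 2)) (v w : X) (l : List X) :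
    cup (s :: ss) (Finsupp.single (v :: w :: l) 1) =
      (s v + s w) * cup ss (Finsupp.single (w :: l) 1) := by
  have h := cup_bd ss (Finsupp.single (v :: w :: l) 1)
  rw [bd_single, bdL, map_add] at h
  have h1 : cup ss (cons v (bdL (w :: l))) = cup ss (Finsupp.single (w :: l) 1) := by
    rw [← sub_eq_zero, CharTwo.sub_eq_add, add_comm, h]
  have h2 : weight s (cup ss) (Finsupp.single (w :: l) 1) =
      s w * cup ss (Finsupp.single (w :: l) 1) := by simp [weight]
  rw [cup, LinearMap.comp_apply, bd_single, bdL, map_add, weight_cons, h1, h2]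
  ring

/-- The product vanishes on a simplex on which one of the factors is constant, since that factor's
coboundary vanishes on all its edges. -/
lemma cup_vanish (ss : List (X → ZMod 2)) (l : List X) (hl : l.length = ss.length + 1)
    (h : ∃ s ∈ ss, ∀ u ∈ l, ∀ v ∈ l, s u = s v) : cup ss (Finsupp.single l 1) = 0 := by
  induction ss generalizing l with
  | nil => simp at h
  | cons s ss ih =>
    match l, hl with
    | v :: w :: l, hl =>
      rw [cup_cons_cons]
      obtain ⟨r, hr, hc⟩ := h
      rcases List.mem_cons.1 hr with rfl | hr
      · rw [hc v (by simp) w (by simp), CharTwo.add_self_eq_zero, zero_mul]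
      · rw [ih (w :: l) (by simpa using hl) ⟨r, hr, fun a ha b hb =>
          hc a (List.mem_cons_of_mem _ ha) b (List.mem_cons_of_mem _ hb)⟩, mul_zero]

end Ch

section
open Set Ch

/-! ### Fine chains and homotopy invariance -/

namespace Ch

/-- Ordered simplices with `L` vertices, all in `A` and at pairwise distance less than `ε`. -/
def Sm {X : Type*} [PseudoMetricSpace X] (A : Set X) (ε : ℝ) (L : ℕ) : Set (List X) :=
  {l | l.length = L ∧ (∀ v ∈ l, v ∈ A) ∧ ∀ u ∈ l, ∀ v ∈ l, dist u v < ε}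

/-- The `ε`-fine (Vietoris) chains of `A`, with `L` vertices per simplex. -/
def Fine {X : Type*} [PseudoMetricSpace X] (A : Set X) (ε : ℝ) (L : ℕ) : Submodule (ZMod 2) (Ch X) :=
  Finsupp.supported (ZMod 2) (ZMod 2) (Sm A ε L)

/-- `z` is the boundary of an `ε`-fine chain of `A`. -/
def Bds {X : Type*} [PseudoMetricSpace X] (A : Set X) (ε : ℝ) (L : ℕ) (z : Ch X) : Prop :=
  ∃ w ∈ Fine A ε (L + 1), bd w = z

variable {X Y : Type*}

lemma map_mem_of_supported {M : Type*} [AddCommGroup M] [Module (ZMod 2) M]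
    (φ : Ch X →ₗ[ZMod 2] M) (N : Submodule (ZMod 2) M) (S : Set (List X))
    (h : ∀ l ∈ S, φ (Finsupp.single l 1) ∈ N) {z : Ch X}
    (hz : z ∈ Finsupp.supported (ZMod 2) (ZMod 2) S) : φ z ∈ N := by
  rw [Finsupp.supported_eq_span_single] at hz
  have : Submodule.span (ZMod 2) ((fun i => Finsupp.single i (1 : ZMod 2)) '' S) ≤ N.comap φ := by
    rw [Submodule.span_le]
    rintro _ ⟨l, hl, rfl⟩
    exact h l hl
  exact this hz

lemma cons_mem (v : X) (S S' : Set (List X)) (h : ∀ l ∈ S, v :: l ∈ S') {z : Ch X}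
    (hz : z ∈ Finsupp.supported (ZMod 2) (ZMod 2) S) :
    cons v z ∈ Finsupp.supported (ZMod 2) (ZMod 2) S' :=
  map_mem_of_supported _ _ S (fun l hl => by
    rw [cons_single]; exact Finsupp.single_mem_supported _ _ (h l hl)) hz

lemma bdL_mem (l : List X) : bdL l ∈ Finsupp.supported (ZMod 2) (ZMod 2)
    {l' : List X | l'.length + 1 = l.length ∧ l' ⊆ l} := by
  induction l with
  | nil => simp [bdL]
  | cons v l ih =>
    refine add_mem (Finsupp.single_mem_supported _ _ ⟨by simp, by simp⟩) (cons_mem v _ _ ?_ ih)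
    rintro l' ⟨h1, h2⟩
    refine ⟨by simp [h1], ?_⟩
    exact List.cons_subset_cons v h2

lemma prismL_mem (f g : X → Y) (l : List X) : prismL f g l ∈ Finsupp.supported (ZMod 2) (ZMod 2)
    {l' : List Y | l'.length = l.length + 1 ∧ ∀ w ∈ l', ∃ v ∈ l, w = f v ∨ w = g v} := by
  induction l with
  | nil => simp [prismL]
  | cons v l ih =>
    refine add_mem (Finsupp.single_mem_supported _ _ ⟨by simp, ?_⟩) (cons_mem (f v) _ _ ?_ ih)
    · intro w hw
      simp only [List.mem_cons, List.mem_map] at hw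
      rcases hw with rfl | rfl | ⟨a, ha, rfl⟩
      · exact ⟨v, by simp, Or.inl rfl⟩
      · exact ⟨v, by simp, Or.inr rfl⟩
      · exact ⟨a, by simp [ha], Or.inr rfl⟩
    · rintro l' ⟨h1, h2⟩
      refine ⟨by simp [h1], ?_⟩
      intro w hw
      rcases List.mem_cons.1 hw with rfl | hw
      · exact ⟨v, by simp, Or.inl rfl⟩
      · obtain ⟨a, ha, h⟩ := h2 w hw
        exact ⟨a, by simp [ha], h⟩

variable [PseudoMetricSpace X] [PseudoMetricSpace Y] {A : Set X} {B : Set Y} {ε δ : ℝ} {L : ℕ}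

lemma Fine.mono {A' : Set X} (hA : A ⊆ A') (h : δ ≤ ε) {z : Ch X} (hz : z ∈ Fine A δ L) :
    z ∈ Fine A' ε L :=
  have : Sm A δ L ⊆ Sm A' ε L := fun _ hl => ⟨hl.1, fun v hv => hA (hl.2.1 v hv),
    fun u hu v hv => (hl.2.2 u hu v hv).trans_le h⟩
  Finsupp.supported_mono this hz

lemma Bds.mono {A' : Set X} (hA : A ⊆ A') (h : δ ≤ ε) {z : Ch X} (hz : Bds A δ L z) :
    Bds A' ε L z := by
  obtain ⟨w, hw, rfl⟩ := hz
  exact ⟨w, Fine.mono hA h hw, rfl⟩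

lemma Bds.add {z z' : Ch X} (hz : Bds A ε L z) (hz' : Bds A ε L z') : Bds A ε L (z + z') := by
  obtain ⟨w, hw, rfl⟩ := hz
  obtain ⟨w', hw', rfl⟩ := hz'
  exact ⟨w + w', add_mem hw hw', map_add _ _ _⟩

lemma Fine.bd {z : Ch X} (hz : z ∈ Fine A ε (L + 1)) : Ch.bd z ∈ Fine A ε L := by
  refine map_mem_of_supported _ _ _ (fun l hl => ?_) hz
  rw [bd_single]
  refine Finsupp.supported_mono ?_ (bdL_mem l)
  rintro l' ⟨h1, h2⟩
  exact ⟨by have := hl.1; omega, fun v hv => hl.2.1 v (h2 hv),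
    fun u hu v hv => hl.2.2 u (h2 hu) v (h2 hv)⟩

lemma Fine.push {f : X → Y} (hf : ∀ x ∈ A, f x ∈ B)
    (hd : ∀ x ∈ A, ∀ y ∈ A, dist x y < δ → dist (f x) (f y) < ε) {z : Ch X}
    (hz : z ∈ Fine A δ L) : Ch.push f z ∈ Fine B ε L := by
  refine map_mem_of_supported _ _ _ (fun l hl => ?_) hz
  rw [push_single]
  refine Finsupp.single_mem_supported _ _ ⟨by simp [hl.1], ?_, ?_⟩
  · simp only [List.mem_map]
    rintro _ ⟨a, ha, rfl⟩
    exact hf a (hl.2.1 a ha)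
  · simp only [List.mem_map]
    rintro _ ⟨a, ha, rfl⟩ _ ⟨b, hb, rfl⟩
    exact hd a (hl.2.1 a ha) b (hl.2.1 b hb) (hl.2.2 a ha b hb)

lemma Bds.push {f : X → Y} (hf : ∀ x ∈ A, f x ∈ B)
    (hd : ∀ x ∈ A, ∀ y ∈ A, dist x y < δ → dist (f x) (f y) < ε) {z : Ch X}
    (hz : Bds A δ L z) : Bds B ε L (Ch.push f z) := by
  obtain ⟨w, hw, rfl⟩ := hz
  exact ⟨Ch.push f w, Fine.push hf hd hw, bd_push f w⟩

lemma Fine.prism {f g : X → Y} (hf : ∀ x ∈ A, f x ∈ B ∧ g x ∈ B)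
    (hd : ∀ x ∈ A, ∀ y ∈ A, dist x y < δ →
      dist (f x) (f y) < ε ∧ dist (f x) (g y) < ε ∧ dist (g x) (g y) < ε) {z : Ch X}
    (hz : z ∈ Fine A δ L) : Ch.prism f g z ∈ Fine B ε (L + 1) := by
  refine map_mem_of_supported _ _ _ (fun l hl => ?_) hz
  rw [prism_single]
  refine Finsupp.supported_mono ?_ (prismL_mem f g l)
  rintro l' ⟨h1, h2⟩
  refine ⟨by rw [h1, hl.1], ?_, ?_⟩
  · intro v hv
    obtain ⟨a, ha, rfl | rfl⟩ := h2 v hv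
    exacts [(hf a (hl.2.1 a ha)).1, (hf a (hl.2.1 a ha)).2]
  · intro u hu v hv
    obtain ⟨a, ha, h⟩ := h2 u hu
    obtain ⟨b, hb, h'⟩ := h2 v hv
    have h3 := hd a (hl.2.1 a ha) b (hl.2.1 b hb) (hl.2.2 a ha b hb)
    have h4 := hd b (hl.2.1 b hb) a (hl.2.1 a ha) (hl.2.2 b hb a ha)
    rcases h with rfl | rfl <;> rcases h' with rfl | rfl
    exacts [h3.1, h3.2.1, by rw [dist_comm]; exact h4.2.1, h3.2.2]

/-- Homotopy invariance: on a compact set, the images of a sufficiently fine cycle under the two ends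
of a homotopy differ by the boundary of an `ε`-fine chain. The homotopy is cut into short time steps,
each of which contributes a prism. -/
lemma homotopy (hA : IsCompact A) (H : ℝ → X → Y)
    (hH : ContinuousOn (fun p : ℝ × X => H p.1 p.2) (Icc 0 1 ×ˢ A))
    (hB : ∀ t ∈ Icc (0 : ℝ) 1, ∀ x ∈ A, H t x ∈ B) (hε : 0 < ε) :
    ∃ δ > 0, ∀ L, ∀ z ∈ Fine A δ L, Ch.bd z = 0 →
      Bds B ε L (Ch.push (H 0) z + Ch.push (H 1) z) := by
  have huc := (isCompact_Icc.prod hA).uniformContinuousOn_of_continuous hH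
  obtain ⟨δ, hδ, hd⟩ := Metric.uniformContinuousOn_iff.1 huc ε hε
  obtain ⟨N, hN⟩ := exists_nat_one_div_lt hδ
  refine ⟨δ, hδ, fun L z hz hz0 => ?_⟩
  have hN0 : (0 : ℝ) < N + 1 := by positivity
  have key : ∀ j : ℕ, j ≤ N + 1 → Bds B ε L (Ch.push (H 0) z + Ch.push (H (j / (N + 1))) z) := by
    intro j
    induction j with
    | zero =>
      intro _
      refine ⟨0, zero_mem _, ?_⟩
      simp [ZModModule.add_self]
    | succ j ih =>
      intro hj
      have hj' : (j : ℝ) + 1 ≤ N + 1 := by exact_mod_cast hj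
      have t0 : (j : ℝ) / (N + 1) ∈ Icc (0 : ℝ) 1 :=
        ⟨by positivity, by rw [div_le_one hN0]; linarith⟩
      have t1 : ((j + 1 : ℕ) : ℝ) / (N + 1) ∈ Icc (0 : ℝ) 1 :=
        ⟨by positivity, by rw [div_le_one hN0]; push_cast; linarith⟩
      have hdd : dist ((j : ℝ) / (N + 1)) (((j + 1 : ℕ) : ℝ) / (N + 1)) < δ := by
        rw [Real.dist_eq, ← sub_div, abs_div, abs_of_pos hN0]
        push_cast
        simpa using hN
      have step : Bds B ε L (Ch.push (H (j / (N + 1))) z + Ch.push (H ((j + 1 : ℕ) / (N + 1))) z) := by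
        refine ⟨Ch.prism (H (j / (N + 1))) (H ((j + 1 : ℕ) / (N + 1))) z, Fine.prism (A := A) (δ := δ)
          (fun x hx => ⟨hB _ t0 x hx, hB _ t1 x hx⟩) (fun x hx y hy hxy => ⟨?_, ?_, ?_⟩) hz, ?_⟩
        · exact hd (_, x) ⟨t0, hx⟩ (_, y) ⟨t0, hy⟩ (by simpa [Prod.dist_eq, hδ] using hxy)
        · exact hd (_, x) ⟨t0, hx⟩ (_, y) ⟨t1, hy⟩ (max_lt hdd hxy)
        · exact hd (_, x) ⟨t1, hx⟩ (_, y) ⟨t1, hy⟩ (by simpa [Prod.dist_eq, hδ] using hxy)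
        · have := bd_prism (H (j / (N + 1))) (H ((j + 1 : ℕ) / (N + 1))) z
          rwa [hz0, map_zero, add_zero] at this
      have := (ih (by omega)).add step
      rwa [add_assoc, ← add_assoc (Ch.push (H (j / (N + 1))) z), ZModModule.add_self, zero_add] at this
  have := key (N + 1) le_rfl
  rwa [show ((N + 1 : ℕ) : ℝ) / (N + 1) = 1 by push_cast; exact div_self hN0.ne'] at this

/-- The image of a cycle under a constant map bounds the cone over it with apex that constant. -/
lemma Bds.of_const {b : Y} (hb : b ∈ B) (hε : 0 < ε) {z : Ch X}
    (hz : z ∈ Fine A δ L) (hz0 : Ch.bd z = 0) : Bds B ε L (Ch.push (fun _ : X => b) z) := by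
  refine ⟨cons b (Ch.push (fun _ => b) z), ?_, by rw [bd_cons, bd_push, hz0]; simp⟩
  refine cons_mem b (Sm {b} ε L) _ ?_ (Fine.push (A := A) (δ := δ) (B := {b}) (ε := ε) ?_ ?_ hz)
  · rintro l ⟨h1, h2, h3⟩
    have h2' : ∀ v ∈ b :: l, v = b := by
      intro v hv
      rcases List.mem_cons.1 hv with h | h
      exacts [h, h2 v h]
    refine ⟨by simp [h1], fun v hv => h2' v hv ▸ hb, fun u hu v hv => ?_⟩
    rw [h2' u hu, h2' v hv, dist_self]; exact hε
  · simp
  · intro _ _ _ _ _; simpa using hε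

/-- The homology of a `(d - 1)`-sphere, in the form used below: sufficiently fine cycles with fewer than
`d` vertices bound finely, and among any two fine cycles with `d` vertices and their sum, at least one
bounds finely. The second half says that the top reduced homology has at most two elements. -/
def SphProp (A : Set X) (d : ℕ) : Prop :=
  ∀ ε > 0, ∃ δ > 0, (∀ L < d, ∀ z ∈ Fine A δ L, Ch.bd z = 0 → Bds A ε L z) ∧
    ∀ z₁ ∈ Fine A δ d, ∀ z₂ ∈ Fine A δ d, Ch.bd z₁ = 0 → Ch.bd z₂ = 0 →
      Bds A ε d z₁ ∨ Bds A ε d z₂ ∨ Bds A ε d (z₁ + z₂)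

/-- `SphProp` passes along an isometry `g` with inverse `f`. -/
lemma SphProp.transfer {d : ℕ} (h : SphProp A d) (f : X → Y) (g : Y → X)
    (hf : ∀ x ∈ A, f x ∈ B) (hg : ∀ y ∈ B, g y ∈ A) (hfg : ∀ y ∈ B, f (g y) = y)
    (hfd : ∀ x ∈ A, ∀ x' ∈ A, dist (f x) (f x') = dist x x')
    (hgd : ∀ y ∈ B, ∀ y' ∈ B, dist (g y) (g y') = dist y y') : SphProp B d := by
  intro ε hε
  obtain ⟨δ, hδ, h1, h2⟩ := h ε hε
  have gf : ∀ L, ∀ z ∈ Fine B δ L, Ch.push g z ∈ Fine A δ L := fun L z hz =>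
    Fine.push hg (fun x hx y hy hxy => by rwa [hgd x hx y hy]) hz
  have fb : ∀ L z, Bds A ε L z → Bds B ε L (Ch.push f z) := fun L z hz =>
    Bds.push hf (fun x hx y hy hxy => by rwa [hfd x hx y hy]) hz
  have hid : ∀ L, ∀ z ∈ Fine B δ L, Ch.push f (Ch.push g z) = z := by
    intro L z hz
    rw [push_push]
    have := map_mem_of_supported (Ch.push (f ∘ g) - LinearMap.id) ⊥ _ (fun l hl => ?_) hz
    · simpa [sub_eq_zero] using this
    · have : l.map (f ∘ g) = l :=
        (List.map_congr_left fun v hv => hfg v (hl.2.1 v hv)).trans (List.map_id l)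
      simp [this]
  refine ⟨δ, hδ, fun L hL z hz hz0 => ?_, fun z₁ hz₁ z₂ hz₂ h₁ h₂ => ?_⟩
  · have := fb _ _ (h1 L hL _ (gf _ _ hz) (by rw [bd_push, hz0, map_zero]))
    rwa [hid _ _ hz] at this
  · have := h2 _ (gf _ _ hz₁) _ (gf _ _ hz₂) (by rw [bd_push, h₁, map_zero])
      (by rw [bd_push, h₂, map_zero])
    rw [← map_add] at this
    rcases this with h | h | h
    · left; have := fb _ _ h; rwa [hid _ _ hz₁] at this
    · right; left; have := fb _ _ h; rwa [hid _ _ hz₂] at this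
    · right; right; have := fb _ _ h; rwa [hid _ _ (add_mem hz₁ hz₂)] at this

end Ch

/-! ### Homology of the spheres by suspension -/

namespace Ch

/-- The point at time `t` of the segment from `x` to `p`, projected radially to the unit sphere. The
value is `0` when the segment meets the origin at time `t`. -/
noncomputable def slerp {E : Type*} [NormedAddCommGroup E] [NormedSpace ℝ E] (t : ℝ) (x p : E) : E :=
  ‖(1 - t) • x + t • p‖⁻¹ • ((1 - t) • x + t • p)

section slerp
variable {E : Type*} [NormedAddCommGroup E] [NormedSpace ℝ E]

lemma lerp_ne_zero {t : ℝ} (ht : t ∈ Icc (0 : ℝ) 1) {x p : E} (hx : ‖x‖ = 1) (hp : ‖p‖ = 1)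
    (h : x ≠ -p) : (1 - t) • x + t • p ≠ 0 := by
  intro h0
  have h1 : (1 - t) • x = -(t • p) := eq_neg_of_add_eq_zero_left h0
  have h2 := congrArg norm h1
  rw [norm_neg, norm_smul, norm_smul, hx, hp, Real.norm_of_nonneg (by linarith [ht.2]),
    Real.norm_of_nonneg ht.1] at h2
  have h3 : t = 1 / 2 := by linarith
  subst h3
  apply h
  have : (1 / 2 : ℝ) • x = (1 / 2 : ℝ) • (-p) := by
    rw [smul_neg, ← h1]; norm_num
  exact smul_right_injective E (by norm_num : (1 / 2 : ℝ) ≠ 0) this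

lemma norm_slerp {t : ℝ} (ht : t ∈ Icc (0 : ℝ) 1) {x p : E} (hx : ‖x‖ = 1) (hp : ‖p‖ = 1)
    (h : x ≠ -p) : ‖slerp t x p‖ = 1 := by
  rw [slerp, norm_smul, norm_inv, norm_norm]
  exact inv_mul_cancel₀ (norm_ne_zero_iff.2 (lerp_ne_zero ht hx hp h))

lemma slerp_zero {x : E} (p : E) (hx : ‖x‖ = 1) : slerp 0 x p = x := by simp [slerp, hx]

lemma slerp_one (x : E) {p : E} (hp : ‖p‖ = 1) : slerp 1 x p = p := by simp [slerp, hp]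

lemma continuousOn_slerp {α : Type*} [TopologicalSpace α] {S : Set α} {t : α → ℝ} {x p : α → E}
    (ht : ContinuousOn t S) (hx : ContinuousOn x S) (hp : ContinuousOn p S)
    (h : ∀ a ∈ S, t a ∈ Icc (0 : ℝ) 1 ∧ ‖x a‖ = 1 ∧ ‖p a‖ = 1 ∧ x a ≠ -p a) :
    ContinuousOn (fun a => slerp (t a) (x a) (p a)) S := by
  have h1 : ContinuousOn (fun a => (1 - t a) • x a + t a • p a) S := by fun_prop
  refine ContinuousOn.smul (h1.norm.inv₀ fun a ha => ?_) h1
  obtain ⟨h1, h2, h3, h4⟩ := h a ha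
  exact norm_ne_zero_iff.2 (lerp_ne_zero h1 h2 h3 h4)

end slerp

variable {N : ℕ}

/-- The unit sphere of the subspace of `ℝᴺ` spanned by the first `d` coordinate vectors, of
dimension `d - 1`; it is empty for `d = 0`. -/
def Sd (N d : ℕ) : Set (EuclideanSpace ℝ (Fin N)) :=
  {x | ‖x‖ = 1 ∧ ∀ i : Fin N, d ≤ i → x i = 0}

lemma isCompact_Sd (N d : ℕ) : IsCompact (Sd N d) := by
  have h : IsCompact (Metric.sphere (0 : EuclideanSpace ℝ (Fin N)) 1) := isCompact_sphere _ _
  refine h.of_isClosed_subset ?_ (fun x hx => by simpa using hx.1)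
  have : Sd N d = {x | ‖x‖ = 1} ∩ ⋂ i : Fin N, ⋂ _ : d ≤ i, {x | x i = 0} := by
    ext x; simp [Sd]
  rw [this]
  refine IsClosed.inter (isClosed_eq continuous_norm continuous_const) ?_
  refine isClosed_iInter fun i => isClosed_iInter fun _ => isClosed_eq ?_ continuous_const
  fun_prop

/-- The part of the sphere at angle at most `120°` from `p` has no homology inside the sphere: it contracts
to `p` along great circles. -/
lemma cap (d : ℕ) {p : EuclideanSpace ℝ (Fin N)} (hp : p ∈ Sd N d) {ε : ℝ} (hε : 0 < ε) :
    ∃ δ > 0, ∀ L, ∀ z ∈ Fine {x ∈ Sd N d | -(1 / 2) ≤ inner ℝ x p} δ L, Ch.bd z = 0 →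
      Bds (Sd N d) ε L z := by
  set A := {x ∈ Sd N d | -(1 / 2) ≤ inner ℝ x p} with hA
  have hAc : IsCompact A := (isCompact_Sd N d).inter_right
    (isClosed_le continuous_const (continuous_id.inner (𝕜 := ℝ) (continuous_const (y := p))))
  have hne : ∀ x ∈ A, x ≠ -p := by
    rintro x ⟨-, hx⟩ rfl
    rw [inner_neg_left, real_inner_self_eq_norm_sq, hp.1] at hx
    norm_num at hx
  obtain ⟨δ, hδ, h⟩ := homotopy (B := Sd N d) hAc (fun t x => slerp t x p)
    (continuousOn_slerp continuousOn_fst continuousOn_snd continuousOn_const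
      fun a ha => ⟨ha.1, ha.2.1.1, hp.1, hne _ ha.2⟩)
    (fun t ht x hx => ⟨norm_slerp ht hx.1.1 hp.1 (hne _ hx), fun i hi => by
      simp [slerp, hx.1.2 i hi, hp.2 i hi]⟩) hε
  refine ⟨δ, hδ, fun L z hz hz0 => ?_⟩
  have h1 := h L z hz hz0
  have e1 : Ch.push (fun x => slerp 1 x p) z = Ch.push (fun _ => p) z := by
    congr 2; funext x; exact slerp_one x hp.1
  have e0 : Ch.push (fun x => slerp 0 x p) z = z := by
    have := map_mem_of_supported (Ch.push (fun x => slerp 0 x p) - LinearMap.id) ⊥ _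
      (fun l hl => ?_) hz
    · simpa [sub_eq_zero] using this
    · have : l.map (fun x => slerp 0 x p) = l :=
        (List.map_congr_left fun v hv => slerp_zero p (hl.2.1 v hv).1.1).trans (List.map_id l)
      simp [this]
  rw [e0, e1] at h1
  have := h1.add (Bds.of_const hp hε hz hz0)
  rwa [add_assoc, ZModModule.add_self, add_zero] at this

/-- The part of a chain carried by the simplices that have a vertex in the half-space `0 ≤ xᵢ`. -/
noncomputable def hi (i : Fin N) : Ch (EuclideanSpace ℝ (Fin N)) →ₗ[ZMod 2] Ch (EuclideanSpace ℝ (Fin N)) :=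
  open Classical in
  Finsupp.linearCombination (ZMod 2) fun l =>
    if ∃ v ∈ l, 0 ≤ v i then Finsupp.single l 1 else 0

/-- Radial projection to the equator `xᵢ = 0`; the poles are sent to `0`. -/
noncomputable def equator (i : Fin N) (x : EuclideanSpace ℝ (Fin N)) : EuclideanSpace ℝ (Fin N) :=
  ‖x - EuclideanSpace.single i (x i)‖⁻¹ • (x - EuclideanSpace.single i (x i))

lemma hi_mem (i : Fin N) {A : Set (EuclideanSpace ℝ (Fin N))} {δ : ℝ} {L : ℕ}
    {z : Ch (EuclideanSpace ℝ (Fin N))} (hz : z ∈ Fine A δ L) :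
    hi i z ∈ Fine {x ∈ A | -δ < x i} δ L := by
  refine map_mem_of_supported _ _ _ (fun l hl => ?_) hz
  simp only [hi, Finsupp.linearCombination_single, one_smul]
  split_ifs with h
  · refine Finsupp.single_mem_supported _ _ ⟨hl.1, fun v hv => ⟨hl.2.1 v hv, ?_⟩, hl.2.2⟩
    obtain ⟨u, hu, h0⟩ := h
    have h1 := (PiLp.norm_apply_le (u - v) i).trans_lt (by rw [← dist_eq_norm]; exact hl.2.2 u hu v hv)
    rw [PiLp.sub_apply, Real.norm_eq_abs, abs_lt] at h1
    linarith
  · exact zero_mem _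

lemma lo_mem (i : Fin N) {A : Set (EuclideanSpace ℝ (Fin N))} {δ : ℝ} {L : ℕ}
    {z : Ch (EuclideanSpace ℝ (Fin N))} (hz : z ∈ Fine A δ L) :
    z + hi i z ∈ Fine {x ∈ A | x i < 0} δ L := by
  refine map_mem_of_supported (LinearMap.id + hi i) _ _ (fun l hl => ?_) hz
  simp only [hi, LinearMap.add_apply, Finsupp.linearCombination_single, one_smul, LinearMap.id_apply]
  split_ifs with h
  · rw [ZModModule.add_self]; exact zero_mem _
  · push Not at h
    rw [add_zero]
    exact Finsupp.single_mem_supported _ _ ⟨hl.1, fun v hv => ⟨hl.2.1 v hv, h v hv⟩, hl.2.2⟩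

lemma equator_spec {d : ℕ} (i : Fin N) (hi : (i : ℕ) = d) {x : EuclideanSpace ℝ (Fin N)}
    (hx : x ∈ Sd N (d + 1)) (h1 : |x i| < 1) :
    equator i x ∈ Sd N d ∧ dist x (equator i x) ≤ 2 * |x i| := by
  set y := x - EuclideanSpace.single i (x i) with hy
  have hn : ‖EuclideanSpace.single i (x i)‖ = |x i| := by simp
  have hxy : ‖x - y‖ = |x i| := by rw [← hn, hy]; congr 1; abel
  have h2 := abs_norm_sub_norm_le x y
  rw [hx.1, hxy] at h2
  have h3 : 0 < ‖y‖ := by have := (abs_le.1 h2).2; linarith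
  have h4 : ‖equator i x‖ = 1 := by
    rw [equator, ← hy, norm_smul, norm_inv, norm_norm, inv_mul_cancel₀ h3.ne']
  refine ⟨⟨h4, fun j hj => ?_⟩, ?_⟩
  · rw [equator, ← hy, PiLp.smul_apply, hy, PiLp.sub_apply]
    by_cases hji : j = i
    · subst hji; simp
    · have : (j : ℕ) ≠ i := fun h => hji (Fin.ext h)
      rw [hx.2 j (by omega)]
      simp [hji]
  · have h5 : ‖y - equator i x‖ ≤ |x i| := by
      have : y - equator i x = (1 - ‖y‖⁻¹) • y := by rw [equator, ← hy, sub_smul, one_smul]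
      rw [this, norm_smul, Real.norm_eq_abs, ← abs_of_pos h3, ← abs_mul, abs_of_pos h3, sub_mul,
        inv_mul_cancel₀ h3.ne', one_mul, abs_sub_comm]
      exact h2
    rw [dist_eq_norm]
    calc ‖x - equator i x‖ = ‖(x - y) + (y - equator i x)‖ := by congr 1; abel
      _ ≤ _ := norm_add_le _ _
      _ ≤ _ := by rw [hxy]; linarith

lemma Sd_mono (N d : ℕ) : Sd N d ⊆ Sd N (d + 1) := fun _ hx => ⟨hx.1, fun i hi => hx.2 i (by omega)⟩

/-- The Mayer–Vietoris step. Split a fine cycle `z` of the larger sphere into its upper part `hi i z`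
and its lower part; their common boundary is supported near the equator, and if its projection to the
equator bounds, each part can be closed up to a cycle in a cap, so that `z` bounds by `cap`. -/
lemma suspension_step (d : ℕ) (i : Fin N) (hid : (i : ℕ) = d) {ε : ℝ} (hε : 0 < ε) :
    ∃ ε' > 0, ∀ δ' > 0, ∃ δ > 0, ∀ L, ∀ z ∈ Fine (Sd N (d + 1)) δ (L + 1), Ch.bd z = 0 →
      Ch.push (equator i) (bd (hi i z)) ∈ Fine (Sd N d) δ' L ∧
      (Bds (Sd N d) ε' L (Ch.push (equator i) (bd (hi i z))) → Bds (Sd N (d + 1)) ε (L + 1) z) := by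
  have hp : EuclideanSpace.single i (1 : ℝ) ∈ Sd N (d + 1) :=
    ⟨by simp, fun j hj => by
      have : j ≠ i := fun h => by subst h; omega
      simp [this]⟩
  have hq : -EuclideanSpace.single i (1 : ℝ) ∈ Sd N (d + 1) :=
    ⟨by rw [norm_neg]; exact hp.1, fun j hj => by rw [PiLp.neg_apply, hp.2 j hj, neg_zero]⟩
  obtain ⟨η₁, hη₁, H₁⟩ := cap (d + 1) hp hε
  obtain ⟨η₂, hη₂, H₂⟩ := cap (d + 1) hq hε
  refine ⟨min η₁ η₂, lt_min hη₁ hη₂, fun δ' hδ' => ?_⟩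
  set η := min η₁ η₂ with hη
  have hη0 : 0 < η := lt_min hη₁ hη₂
  refine ⟨min (1 / 2) (min (η / 5) (δ' / 5)), by positivity, fun L z hz hz0 => ?_⟩
  set δ := min (1 / 2) (min (η / 5) (δ' / 5)) with hδ
  have d1 : δ ≤ 1 / 2 := min_le_left _ _
  have d2 : 5 * δ ≤ η := by
    have : δ ≤ η / 5 := (min_le_right _ _).trans (min_le_left _ _)
    linarith
  have d3 : 5 * δ ≤ δ' := by
    have : δ ≤ δ' / 5 := (min_le_right _ _).trans (min_le_right _ _)
    linarith
  have d0 : 0 < δ := by positivity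
  have hhi := hi_mem i hz
  have hlo := lo_mem i hz
  set c := bd (hi i z) with hc
  have hc' : bd (z + hi i z) = c := by rw [map_add, hz0, zero_add]
  set B := {x ∈ Sd N (d + 1) | |x i| < δ} with hB
  have hcB : c ∈ Fine B δ L := by
    have m1 := Fine.bd hhi
    have m2 := Fine.bd hlo
    rw [hc'] at m2
    have : c ∈ Finsupp.supported (ZMod 2) (ZMod 2) (Sm {x ∈ Sd N (d + 1) | -δ < x i} δ L ∩
        Sm {x ∈ Sd N (d + 1) | x i < 0} δ L) := by
      rw [Finsupp.supported_inter]; exact ⟨m1, m2⟩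
    refine Finsupp.supported_mono ?_ this
    rintro l ⟨h1, h2⟩
    refine ⟨h1.1, fun v hv => ⟨(h1.2.1 v hv).1, ?_⟩, h1.2.2⟩
    rw [abs_lt]
    exact ⟨(h1.2.1 v hv).2, (h2.2.1 v hv).2.trans d0⟩
  have eqB : ∀ x ∈ B, equator i x ∈ Sd N d ∧ dist x (equator i x) < 2 * δ := fun x hx => by
    have := equator_spec i hid hx.1 (by linarith [hx.2])
    exact ⟨this.1, by linarith [hx.2, this.2]⟩
  have hκ : Ch.push (equator i) c ∈ Fine (Sd N d) (5 * δ) L := by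
    refine Fine.push (fun x hx => (eqB x hx).1) (fun x hx y hy hxy => ?_) hcB
    have a := (eqB x hx).2
    have b := (eqB y hy).2
    have := dist_triangle4 (equator i x) x y (equator i y)
    rw [dist_comm (equator i x) x] at this
    linarith
  refine ⟨Fine.mono subset_rfl d3 hκ, ?_⟩
  rintro ⟨w, hw, hwb⟩
  set K := {x ∈ Sd N (d + 1) | |x i| ≤ 1 / 2} with hK
  have SK : Sd N d ⊆ K := fun x hx => ⟨Sd_mono N d hx, by rw [hx.2 i hid.ge]; norm_num⟩
  have hP : Ch.prism id (equator i) c ∈ Fine K η (L + 1) := by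
    refine Fine.prism (A := B) (B := K) (δ := δ) (f := id) (g := equator i)
      (fun x hx => ⟨⟨hx.1, hx.2.le.trans d1⟩, SK (eqB x hx).1⟩) (fun x hx y hy hxy => ?_) hcB
    have a := (eqB x hx).2
    have b := (eqB y hy).2
    have t1 := dist_triangle4 (equator i x) x y (equator i y)
    have t2 := dist_triangle x y (equator i y)
    rw [dist_comm (equator i x) x] at t1
    simp only [id]
    exact ⟨by linarith, by linarith, by linarith⟩
  have hPb := bd_prism id (equator i) c
  rw [hc, bd_bd, map_zero, add_zero, push_id, ← hc] at hPb
  have hQ : Ch.prism id (equator i) c + w ∈ Fine K η (L + 1) :=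
    add_mem hP (Fine.mono SK le_rfl hw)
  have hQb : bd (Ch.prism id (equator i) c + w) = c := by
    rw [map_add, hPb, hwb, add_assoc, ZModModule.add_self, add_zero]
  set Q := Ch.prism id (equator i) c + w
  have hin : ∀ x : EuclideanSpace ℝ (Fin N),
      inner ℝ x (EuclideanSpace.single i (1 : ℝ)) = x i := fun x => by
    simp [EuclideanSpace.inner_single_right]
  have hz1 : Bds (Sd N (d + 1)) ε (L + 1) (hi i z + Q) := by
    refine H₁ _ _ (add_mem (Fine.mono ?_ ?_ hhi) (Fine.mono ?_ ?_ hQ)) ?_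
    · rintro x ⟨h1, h2⟩
      refine ⟨h1, ?_⟩
      simp only [hin]; linarith
    · exact (by linarith : δ ≤ η).trans (min_le_left _ _)
    · rintro x ⟨h1, h2⟩
      refine ⟨h1, ?_⟩
      have := (abs_le.1 h2).1
      simp only [hin]; linarith
    · exact min_le_left _ _
    · rw [map_add, hQb, ← hc, ZModModule.add_self]
  have hz2 : Bds (Sd N (d + 1)) ε (L + 1) (z + hi i z + Q) := by
    refine H₂ _ _ (add_mem (Fine.mono ?_ ?_ hlo) (Fine.mono ?_ ?_ hQ)) ?_
    · rintro x ⟨h1, h2⟩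
      refine ⟨h1, ?_⟩
      simp only [inner_neg_right, hin]; linarith
    · exact (by linarith : δ ≤ η).trans (min_le_right _ _)
    · rintro x ⟨h1, h2⟩
      refine ⟨h1, ?_⟩
      have := (abs_le.1 h2).2
      simp only [inner_neg_right, hin]; linarith
    · exact min_le_right _ _
    · rw [map_add, hQb, hc', ZModModule.add_self]
  have := hz2.add hz1
  rwa [add_assoc z, add_assoc, ZModModule.add_self, add_zero] at this

lemma Fine.length_zero {X : Type*} [PseudoMetricSpace X] {A : Set X} {δ : ℝ} {z : Ch X}
    (hz : z ∈ Fine A δ 0) : z = 0 ∨ z = Finsupp.single [] 1 := by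
  have h : z = Finsupp.single [] (z []) := by
    ext l
    by_cases hl : l = []
    · subst hl; simp
    · rw [Finsupp.single_eq_of_ne hl]
      by_contra h0
      exact hl (List.length_eq_zero_iff.1 (hz (Finsupp.mem_support_iff.2 h0)).1)
  rw [h]
  generalize z [] = c
  fin_cases c
  · left; exact Finsupp.single_zero _
  · right; rfl

/-- Spheres satisfy `SphProp`, by induction on the dimension. The induction starts at the empty sphere
`S⁻¹`, whose only nonzero chain is the empty simplex. -/
lemma sphProp_Sd : ∀ d ≤ N, SphProp (Sd N d) d := by
  intro d
  induction d with
  | zero =>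
    intro _ ε hε
    refine ⟨ε, hε, fun L hL => absurd hL (by omega), fun z₁ hz₁ z₂ hz₂ _ _ => ?_⟩
    have h0 : Bds (Sd N 0) ε 0 0 := ⟨0, zero_mem _, map_zero _⟩
    rcases Fine.length_zero hz₁ with rfl | rfl
    · exact Or.inl h0
    rcases Fine.length_zero hz₂ with rfl | rfl
    · exact Or.inr (Or.inl h0)
    · right; right; rwa [ZModModule.add_self]
  | succ d ih =>
    intro hd ε hε
    obtain ⟨ε', hε', h⟩ := suspension_step d (⟨d, hd⟩ : Fin N) rfl hε
    obtain ⟨δ', hδ', ih1, ih2⟩ := ih (by omega) ε' hε'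
    obtain ⟨δ, hδ, h⟩ := h δ' hδ'
    have hb : ∀ z, bd (Ch.push (equator ⟨d, hd⟩) (bd (hi (⟨d, hd⟩ : Fin N) z))) = 0 := fun z => by
      rw [bd_push, bd_bd, map_zero]
    refine ⟨δ, hδ, fun L hL z hz hz0 => ?_, fun z₁ hz₁ z₂ hz₂ h₁ h₂ => ?_⟩
    · rcases L with _ | L
      · have hp : EuclideanSpace.single (⟨d, hd⟩ : Fin N) (1 : ℝ) ∈ Sd N (d + 1) :=
          ⟨by simp, fun j hj => by
            have : j ≠ ⟨d, hd⟩ := fun h => by subst h; simp at hj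
            simp [this]⟩
        refine ⟨cons (EuclideanSpace.single ⟨d, hd⟩ 1) z, cons_mem _ _ _ (fun l hl => ?_) hz,
          by rw [bd_cons, hz0, map_zero, add_zero]⟩
        have := List.length_eq_zero_iff.1 hl.1
        subst this
        exact ⟨rfl, by simpa using hp, by simpa using hε⟩
      · obtain ⟨a, b⟩ := h L z hz hz0
        exact b (ih1 L (by omega) _ a (hb z))
    · obtain ⟨a₁, b₁⟩ := h d z₁ hz₁ h₁
      obtain ⟨a₂, b₂⟩ := h d z₂ hz₂ h₂
      obtain ⟨a₃, b₃⟩ := h d (z₁ + z₂) (add_mem hz₁ hz₂) (by rw [map_add, h₁, h₂, add_zero])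
      rcases ih2 _ a₁ _ a₂ (hb _) (hb _) with h | h | h
      · exact Or.inl (b₁ h)
      · exact Or.inr (Or.inl (b₂ h))
      · refine Or.inr (Or.inr (b₃ ?_))
        rwa [map_add, map_add, map_add]

end Ch

/-! ### Equivariant maps and sign cochains -/

section dim
variable {N : ℕ}

/-- A continuous map `Sᴺ⁻¹ → ℝᴺ` is a uniform limit of nowhere vanishing ones: a smooth approximation
has an image of measure zero, so that it can be translated off the origin by an arbitrarily small vector. -/
lemma exists_nonvanishing_near (F : Metric.sphere (0 : EuclideanSpace ℝ (Fin N)) 1 → EuclideanSpace ℝ (Fin N))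
    (hF : Continuous F) {η : ℝ} (hη : 0 < η) :
    ∃ Q : Metric.sphere (0 : EuclideanSpace ℝ (Fin N)) 1 → EuclideanSpace ℝ (Fin N),
      Continuous Q ∧ (∀ x, Q x ≠ 0) ∧ ∀ x, dist (Q x) (F x) < η := by
  obtain ⟨F', hF'⟩ := ContinuousMap.exists_restrict_eq
    (Metric.isClosed_sphere (x := (0 : EuclideanSpace ℝ (Fin N))) (ε := 1)) ⟨F, hF⟩
  obtain ⟨P, hP, hPd, -⟩ := F'.continuous.exists_contDiff_approx 1 (ε := fun _ => η / 2)
    continuous_const (fun _ => by positivity)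
  have hnull : MeasureTheory.volume (P '' Metric.sphere (0 : EuclideanSpace ℝ (Fin N)) 1) = 0 :=
    MeasureTheory.addHaar_image_eq_zero_of_differentiableOn_of_addHaar_eq_zero _
      (hP.differentiable (by simp)).differentiableOn
      (MeasureTheory.Measure.addHaar_sphere_of_ne_zero _ _ one_ne_zero)
  have hint := MeasureTheory.Measure.interior_eq_empty_of_null hnull
  obtain ⟨a, ha, han⟩ : ∃ a ∈ Metric.ball (0 : EuclideanSpace ℝ (Fin N)) (η / 2),
      a ∉ P '' Metric.sphere (0 : EuclideanSpace ℝ (Fin N)) 1 := by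
    by_contra! h
    have := interior_maximal h Metric.isOpen_ball
    rw [hint] at this
    exact this (Metric.mem_ball_self (by positivity))
  refine ⟨fun x => P x - a, by have := hP.continuous; fun_prop, fun x h0 => han ⟨x, x.2, sub_eq_zero.1 h0⟩, fun x => ?_⟩
  have h1 : F' x = F x := DFunLike.congr_fun hF' x
  have h2 := hPd x
  rw [h1] at h2
  have h3 : dist (P x - a) (P x) < η / 2 := by
    simpa [dist_eq_norm] using ha
  linarith [dist_triangle (P x - a) (P x) (F x)]

/-- The diagonal representation of `G` on `ℝᴺ` in which `g` multiplies the `i`-th coordinate by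
`(-1) ^ κ i g`. -/
noncomputable def signRep {G : Type*} (κ : Fin N → G → ZMod 2) (g : G)
    (v : EuclideanSpace ℝ (Fin N)) : EuclideanSpace ℝ (Fin N) :=
  WithLp.toLp 2 fun i => (if κ i g = 0 then 1 else -1) * v i

section
variable {G : Type*} (κ : Fin N → G → ZMod 2)

lemma signRep_apply (g : G) (v : EuclideanSpace ℝ (Fin N)) (i : Fin N) :
    signRep κ g v i = (if κ i g = 0 then 1 else -1) * v i := rfl

lemma signRep_self (g : G) (v : EuclideanSpace ℝ (Fin N)) : signRep κ g (signRep κ g v) = v := by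
  ext i
  rw [signRep_apply, signRep_apply]
  split_ifs <;> simp

lemma signRep_add (g : G) (v w : EuclideanSpace ℝ (Fin N)) :
    signRep κ g (v + w) = signRep κ g v + signRep κ g w := by
  ext i
  simp only [signRep_apply, PiLp.add_apply, mul_add]

lemma signRep_zero (g : G) : signRep κ g (0 : EuclideanSpace ℝ (Fin N)) = 0 := by
  ext i; simp [signRep_apply]

lemma signRep_sum {ι : Type*} (s : Finset ι) (g : G) (f : ι → EuclideanSpace ℝ (Fin N)) :
    signRep κ g (∑ j ∈ s, f j) = ∑ j ∈ s, signRep κ g (f j) :=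
  map_sum (⟨⟨signRep κ g, signRep_zero κ g⟩, signRep_add κ g⟩ :
    EuclideanSpace ℝ (Fin N) →+ EuclideanSpace ℝ (Fin N)) f s

lemma norm_signRep (g : G) (v : EuclideanSpace ℝ (Fin N)) : ‖signRep κ g v‖ = ‖v‖ := by
  rw [EuclideanSpace.norm_eq, EuclideanSpace.norm_eq]
  congr 1
  refine Finset.sum_congr rfl fun i _ => ?_
  rw [signRep_apply]
  split_ifs <;> simp

lemma continuous_signRep (g : G) : Continuous (signRep κ g : EuclideanSpace ℝ (Fin N) → _) := by
  unfold signRep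
  fun_prop

variable [Group G]

lemma signRep_mul (hκ : ∀ i g h, κ i (g * h) = κ i g + κ i h) (g h : G)
    (v : EuclideanSpace ℝ (Fin N)) : signRep κ (g * h) v = signRep κ g (signRep κ h v) := by
  ext i
  have key : ∀ a b : ZMod 2, (if a + b = 0 then (1 : ℝ) else -1) =
      (if a = 0 then 1 else -1) * (if b = 0 then 1 else -1) := by
    have h2 : ∀ a : ZMod 2, a = 0 ∨ a = 1 := by decide
    intro a b
    rcases h2 a with rfl | rfl <;> rcases h2 b with rfl | rfl <;>
      simp [CharTwo.add_self_eq_zero]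
  rw [signRep_apply, signRep_apply, signRep_apply, hκ, key, mul_assoc]

/-- If nowhere vanishing maps `X → ℝᴺ` are uniformly dense, then a free action on the compact space `X`
admits a nowhere vanishing equivariant map to any sum of `N` sign representations. The map is made
nonzero on one small ball after another; on a ball disjoint from its translates an arbitrary perturbation
extends equivariantly, and a small perturbation does not spoil the balls already treated. -/
lemma exists_equivariant [Finite G] {X : Type*} [MetricSpace X] [CompactSpace X] [MulAction G X]
    [ContinuousConstSMul G X] (hfree : ∀ g : G, g ≠ 1 → ∀ x : X, g • x ≠ x)
    (hX : ∀ F : X → EuclideanSpace ℝ (Fin N), Continuous F → ∀ η > 0,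
      ∃ Q : X → EuclideanSpace ℝ (Fin N),
        Continuous Q ∧ (∀ x, Q x ≠ 0) ∧ ∀ x, dist (Q x) (F x) < η)
    (hκ : ∀ i g h, κ i (g * h) = κ i g + κ i h) :
    ∃ F : X → EuclideanSpace ℝ (Fin N), Continuous F ∧ (∀ g x, F (g • x) = signRep κ g (F x)) ∧
      ∀ x, F x ≠ 0 := by
  classical
  have := Fintype.ofFinite G
  -- around each point there is a ball moved off itself by every nontrivial group element
  have hr : ∀ x₀ : X, ∃ r > 0, ∀ g : G, g ≠ 1 → ∀ x, dist x x₀ < 2 * r → 2 * r ≤ dist (g • x) x₀ := by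
    intro x₀
    have h1 : ∀ g : G, ∃ r > 0, g ≠ 1 → ∀ x, dist x x₀ < 2 * r → 2 * r ≤ dist (g • x) x₀ := by
      intro g
      by_cases hg : g = 1
      · exact ⟨1, one_pos, fun h => absurd hg h⟩
      have hpos : 0 < dist (g • x₀) x₀ := dist_pos.2 (hfree g hg x₀)
      have hc : Continuous fun x : X => g • x := continuous_const_smul g
      obtain ⟨δ, hδ, h⟩ := Metric.continuous_iff.1 hc x₀ (dist (g • x₀) x₀ / 2) (by positivity)
      refine ⟨min (δ / 2) (dist (g • x₀) x₀ / 4), by positivity, fun _ x hx => ?_⟩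
      have a1 := min_le_left (δ / 2) (dist (g • x₀) x₀ / 4)
      have a2 := min_le_right (δ / 2) (dist (g • x₀) x₀ / 4)
      have h2 := h x (by linarith)
      have := dist_triangle_left (g • x₀) x₀ (g • x)
      linarith
    choose r hr0 hr using h1
    obtain ⟨g₀, -, hg₀⟩ := Finset.exists_min_image Finset.univ r ⟨1, Finset.mem_univ _⟩
    refine ⟨r g₀, hr0 g₀, fun g hg x hx => ?_⟩
    have := hg₀ g (Finset.mem_univ g)
    have := hr g hg x (by linarith)
    linarith
  choose r hr0 hr using hr
  have step : ∀ t : Finset X, ∃ F : X → EuclideanSpace ℝ (Fin N), Continuous F ∧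
      (∀ g x, F (g • x) = signRep κ g (F x)) ∧ ∀ x₀ ∈ t, ∀ x, dist x x₀ ≤ r x₀ → F x ≠ 0 := by
    intro t
    induction t using Finset.induction_on with
    | empty => exact ⟨fun _ => 0, continuous_const, fun g x => (signRep_zero κ g).symm, by simp⟩
    | insert x₀ t _ ih =>
      obtain ⟨F, hF, hFe, hF0⟩ := ih
      -- a positive lower bound for `‖F‖` on the balls already treated
      obtain ⟨c, hc, hcF⟩ : ∃ c > 0, ∀ x₀ ∈ t, ∀ x, dist x x₀ ≤ r x₀ → c ≤ ‖F x‖ := by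
        have hK : IsCompact (⋃ x₀ ∈ t, Metric.closedBall x₀ (r x₀)) :=
          t.finite_toSet.isCompact_biUnion fun x _ => Metric.isClosed_closedBall.isCompact
        obtain ⟨c, hc, h⟩ : ∃ c > 0, ∀ x ∈ ⋃ x₀ ∈ t, Metric.closedBall x₀ (r x₀), c ≤ ‖F x‖ := by
          rcases (⋃ x₀ ∈ t, Metric.closedBall x₀ (r x₀)).eq_empty_or_nonempty with h0 | h0
          · exact ⟨1, one_pos, by simp [h0]⟩
          · obtain ⟨y, hy, hy'⟩ := hK.exists_isMinOn h0 hF.norm.continuousOn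
            refine ⟨‖F y‖, ?_, fun x hx => hy' hx⟩
            simp only [mem_iUnion, Metric.mem_closedBall] at hy
            obtain ⟨x₁, h1, h2⟩ := hy
            exact norm_pos_iff.2 (hF0 x₁ h1 y h2)
        exact ⟨c, hc, fun x₀ h0 x hx => h x (by
          simp only [mem_iUnion, Metric.mem_closedBall]; exact ⟨x₀, h0, hx⟩)⟩
      have hG : (0 : ℝ) < Fintype.card G := by exact_mod_cast Fintype.card_pos
      obtain ⟨Q, hQ, hQ0, hQF⟩ := hX F hF (c / (2 * Fintype.card G)) (by positivity)
      set φ : X → ℝ := fun x => max 0 (min 1 (2 - dist x x₀ / r x₀)) with hφ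
      have hφc : Continuous φ := by fun_prop
      have φ0 : ∀ x, 0 ≤ φ x := fun x => le_max_left _ _
      have φ1 : ∀ x, φ x ≤ 1 := fun x => max_le zero_le_one (min_le_left _ _)
      have φB : ∀ x, dist x x₀ ≤ r x₀ → φ x = 1 := fun x hx => by
        have : dist x x₀ / r x₀ ≤ 1 := (div_le_one (hr0 x₀)).2 hx
        simp only [hφ]
        rw [min_eq_left (by linarith), max_eq_right zero_le_one]
      have φU : ∀ x, 2 * r x₀ ≤ dist x x₀ → φ x = 0 := fun x hx => by
        have : 2 ≤ dist x x₀ / r x₀ := (le_div_iff₀ (hr0 x₀)).2 hx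
        exact max_eq_left ((min_le_right _ _).trans (by linarith))
      set D : X → EuclideanSpace ℝ (Fin N) := fun x => φ x • (Q x - F x) with hD
      have hDc : Continuous D := by fun_prop
      have hDn : ∀ x, ‖D x‖ ≤ c / (2 * Fintype.card G) := fun x => by
        rw [hD]
        simp only [norm_smul, Real.norm_eq_abs, abs_of_nonneg (φ0 x)]
        have h1 := (hQF x).le
        rw [dist_eq_norm] at h1
        exact (mul_le_of_le_one_left (norm_nonneg _) (φ1 x)).trans h1
      refine ⟨fun x => F x + ∑ g : G, signRep κ g (D (g • x)), ?_, ?_, ?_⟩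
      · refine hF.add (continuous_finsetSum _ fun g _ => (continuous_signRep κ g).comp
          (hDc.comp (continuous_const_smul g)))
      · intro h x
        beta_reduce
        rw [hFe, signRep_add, signRep_sum]
        congr 1
        refine Fintype.sum_equiv (Equiv.mulRight h) _ _ fun g => ?_
        rw [Equiv.coe_mulRight, ← signRep_mul κ hκ, mul_smul, signRep_mul κ hκ, signRep_mul κ hκ]
        have hcomm : ∀ v, signRep κ h (signRep κ g v) = signRep κ g (signRep κ h v) := fun v => by
          rw [← signRep_mul κ hκ, ← signRep_mul κ hκ]
          ext i; simp only [signRep_apply, hκ, add_comm]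
        rw [hcomm, signRep_self]
      · intro x₁ hx₁ x hx
        rcases Finset.mem_insert.1 hx₁ with rfl | hx₁
        · beta_reduce
          rw [Finset.sum_eq_single (1 : G)]
          · have h1 : signRep κ (1 : G) (D x) = D x := by
              have := signRep_mul κ hκ 1 1 (D x)
              rwa [mul_one, signRep_self] at this
            rw [one_smul, h1]
            simp only [hD, φB x hx, one_smul, add_sub_cancel]
            exact hQ0 x
          · intro g _ hg
            simp only [hD]
            rw [φU _ (hr x₁ g hg x (by linarith [hr0 x₁])), zero_smul, signRep_zero]
          · simp
        · intro h0
          have h1 := hcF x₁ hx₁ x hx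
          have h2 : ‖∑ g : G, signRep κ g (D (g • x))‖ ≤ c / 2 := by
            refine (norm_sum_le _ _).trans ?_
            refine (Finset.sum_le_sum fun g _ => (norm_signRep κ g _).le.trans (hDn _)).trans ?_
            rw [Finset.sum_const, Finset.card_univ, nsmul_eq_mul]
            apply le_of_eq; field_simp
          rw [eq_neg_of_add_eq_zero_left h0, norm_neg] at h1
          linarith
  obtain ⟨t, ht⟩ := isCompact_univ.elim_finite_subcover (fun x₀ : X => Metric.ball x₀ (r x₀))
    (fun _ => Metric.isOpen_ball) (fun x _ => mem_iUnion.2 ⟨x, Metric.mem_ball_self (hr0 x)⟩)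
  obtain ⟨F, hF, hFe, hF0⟩ := step t
  refine ⟨F, hF, hFe, fun x => ?_⟩
  have := ht (mem_univ x)
  simp only [mem_iUnion, Metric.mem_ball] at this
  obtain ⟨x₀, h1, h2⟩ := this
  exact hF0 x₀ h1 x h2.le

/-- The signs of the coordinates of an equivariant map, where a vanishing coordinate is given the sign
prescribed by equivariance from a fundamental domain. On a fine simplex some coordinate stays away from
zero, hence has constant sign. -/
lemma exists_signs [Finite G] {X : Type*} [MetricSpace X] [CompactSpace X] [MulAction G X]
    [ContinuousConstSMul G X] (hfree : ∀ g : G, g ≠ 1 → ∀ x : X, g • x ≠ x)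
    (hX : ∀ F : X → EuclideanSpace ℝ (Fin N), Continuous F → ∀ η > 0,
      ∃ Q : X → EuclideanSpace ℝ (Fin N),
        Continuous Q ∧ (∀ x, Q x ≠ 0) ∧ ∀ x, dist (Q x) (F x) < η)
    (hκ : ∀ i g h, κ i (g * h) = κ i g + κ i h) :
    ∃ s : Fin N → X → ZMod 2, (∀ i (g : G) x, s i (g • x) = κ i g + s i x) ∧
      ∃ ε > 0, ∀ l : List X, (∀ u ∈ l, ∀ v ∈ l, dist u v < ε) →
        l = [] ∨ ∃ i, ∀ u ∈ l, ∀ v ∈ l, s i u = s i v := by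
  classical
  obtain ⟨F, hF, hFe, hF0⟩ := exists_equivariant κ hfree hX hκ
  -- `γ x` carries the chosen representative of the orbit of `x` to `x`
  have hγ : ∀ x : X, ∃ g : G, x = g • (Quotient.out (Quotient.mk (MulAction.orbitRel G X) x)) := by
    intro x
    have := Quotient.mk_out (s := MulAction.orbitRel G X) x
    obtain ⟨g, hg⟩ := (MulAction.orbitRel G X).symm this
    exact ⟨g, hg.symm⟩
  choose γ hγ using hγ
  have hγe : ∀ g x, γ (g • x) = g * γ x := by
    intro g x
    have h1 := hγ (g • x)
    have h2 : (Quotient.mk (MulAction.orbitRel G X) (g • x)) = Quotient.mk _ x :=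
      Quotient.sound ⟨g, rfl⟩
    rw [h2] at h1
    nth_rw 1 [hγ x] at h1
    rw [smul_smul] at h1
    by_contra hne
    refine hfree ((γ (g • x))⁻¹ * (g * γ x)) (fun h => hne ?_)
      (Quotient.out (Quotient.mk (MulAction.orbitRel G X) x)) ?_
    · rw [inv_mul_eq_one] at h; exact h
    · rw [mul_smul, h1, inv_smul_smul]
  set s : Fin N → X → ZMod 2 := fun i x =>
    if 0 < F x i then 0 else if F x i < 0 then 1 else κ i (γ x) with hs
  have h2 : ∀ a : ZMod 2, a = 0 ∨ a = 1 := by decide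
  refine ⟨s, fun i g x => ?_, ?_⟩
  · simp only [hs, hFe, signRep_apply, hγe, hκ]
    rcases h2 (κ i g) with h | h
    · simp [h]
    · simp only [h, one_ne_zero, if_false, neg_mul, one_mul, Left.neg_pos_iff, Left.neg_neg_iff]
      rcases lt_trichotomy (F x i) 0 with h0 | h0 | h0
      · rw [if_pos h0, if_neg h0.not_gt, if_pos h0]; rfl
      · simp [h0]
      · rw [if_neg h0.not_gt, if_pos h0, if_pos h0]; rfl
  · rcases isEmpty_or_nonempty X with hXe | hXn
    · exact ⟨1, one_pos, fun l _ => by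
        rcases l with _ | ⟨v, l⟩
        exacts [Or.inl rfl, hXe.elim v]⟩
    obtain ⟨y, hy⟩ := (isCompact_univ (X := X)).exists_isMinOn univ_nonempty
      hF.norm.continuousOn |>.imp fun _ h => h.2
    have hc : 0 < ‖F y‖ := norm_pos_iff.2 (hF0 y)
    -- some coordinate of `F x` is bounded away from zero
    have hN : (0 : ℝ) < N + 1 := by positivity
    have hbig : ∀ x, ∃ i, ‖F y‖ / (N + 1) ≤ |F x i| := by
      intro x
      by_contra! h
      have h1 : ‖F x‖ ≤ ∑ i, |F x i| := by
        have : F x = ∑ i, (F x i) • EuclideanSpace.single i (1 : ℝ) := by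
          ext j; simp [Finset.sum_apply, Pi.single_apply]
        calc ‖F x‖ = ‖∑ i, (F x i) • EuclideanSpace.single i (1 : ℝ)‖ := by rw [← this]
          _ ≤ ∑ i, ‖(F x i) • EuclideanSpace.single i (1 : ℝ)‖ := norm_sum_le _ _
          _ = ∑ i, |F x i| := by simp [norm_smul]
      have h2 : ∑ i, |F x i| ≤ ∑ _i : Fin N, ‖F y‖ / (N + 1) :=
        Finset.sum_le_sum fun i _ => (h i).le
      have h3 : ‖F y‖ ≤ ‖F x‖ := hy (mem_univ x)
      rw [Finset.sum_const, Finset.card_univ, Fintype.card_fin, nsmul_eq_mul] at h2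
      have h4 : (N : ℝ) * (‖F y‖ / (N + 1)) < ‖F y‖ := by
        rw [mul_div_assoc', div_lt_iff₀ hN]; nlinarith
      linarith
    have huc := CompactSpace.uniformContinuous_of_continuous hF
    obtain ⟨ε, hε, h⟩ := Metric.uniformContinuous_iff.1 huc (‖F y‖ / (N + 1)) (by positivity)
    refine ⟨ε, hε, fun l hl => ?_⟩
    rcases l with _ | ⟨v, l⟩
    · exact Or.inl rfl
    right
    obtain ⟨i, hi⟩ := hbig v
    refine ⟨i, ?_⟩
    have key : ∀ u ∈ v :: l, s i u = s i v := by
      intro u hu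
      have h1 := h (hl u hu v (by simp))
      rw [dist_eq_norm] at h1
      have h3 := (PiLp.norm_apply_le (F u - F v) i).trans_lt h1
      rw [PiLp.sub_apply, Real.norm_eq_abs, abs_lt] at h3
      simp only [hs]
      rcases le_abs.1 hi with h4 | h4
      · have : 0 < ‖F y‖ / (N + 1) := by positivity
        rw [if_pos (by linarith), if_pos (by linarith)]
      · have : 0 < ‖F y‖ / (N + 1) := by positivity
        rw [if_neg (by linarith), if_pos (by linarith), if_neg (by linarith), if_pos (by linarith)]
    intro u hu w hw
    rw [key u hu, key w hw]
end
end dim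

/-! ### Great-circle paths on the sphere, and characters -/

/-- The unit sphere `Sⁿ` of `ℝⁿ⁺¹`. -/
abbrev Sph (n : ℕ) := Metric.sphere (0 : EuclideanSpace ℝ (Fin (n + 1))) 1

namespace Ch
variable {n : ℕ}

lemma Sph.norm (x : Sph n) : ‖(x : EuclideanSpace ℝ (Fin (n + 1)))‖ = 1 := by simp

open Classical in
/-- A vector of norm one as a point of `Sⁿ`; all other vectors go to a fixed base point. -/
noncomputable def toSph (v : EuclideanSpace ℝ (Fin (n + 1))) : Sph n :=
  if h : ‖v‖ = 1 then ⟨v, by simpa using h⟩ else ⟨EuclideanSpace.single 0 1, by simp⟩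

lemma coe_toSph {v : EuclideanSpace ℝ (Fin (n + 1))} (h : ‖v‖ = 1) : (toSph v : EuclideanSpace ℝ (Fin (n + 1))) = v := by
  simp [toSph, h]

lemma toSph_coe (x : Sph n) : toSph (x : EuclideanSpace ℝ (Fin (n + 1))) = x :=
  Subtype.ext (coe_toSph (Sph.norm x))

lemma sphProp_Sph (n : ℕ) : SphProp (univ : Set (Sph n)) (n + 1) := by
  refine (sphProp_Sd (n + 1) le_rfl).transfer toSph Subtype.val (by simp)
    (fun y _ => ⟨Sph.norm y, fun i hi => absurd i.2 (by omega)⟩) (fun y _ => toSph_coe y)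
    (fun x hx x' hx' => ?_) (fun _ _ _ _ => rfl)
  rw [Subtype.dist_eq, coe_toSph hx.1, coe_toSph hx'.1]

lemma continuousOn_toSph {α : Type*} [TopologicalSpace α] {S : Set α}
    {g : α → EuclideanSpace ℝ (Fin (n + 1))} (hg : ContinuousOn g S) (h : ∀ a ∈ S, ‖g a‖ = 1) :
    ContinuousOn (fun a => (toSph (g a) : Sph n)) S := by
  rw [Topology.IsInducing.subtypeVal.continuousOn_iff]
  exact hg.congr fun a ha => coe_toSph (h a ha)

/-- The point at time `t` of the great-circle path from `x` to `p`, for `x ≠ -p`. -/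
noncomputable def geo (t : ℝ) (x p : Sph n) : Sph n :=
  toSph (slerp t (x : EuclideanSpace ℝ (Fin (n + 1))) (p : EuclideanSpace ℝ (Fin (n + 1))))

lemma geo_zero (x p : Sph n) : geo 0 x p = x := by
  rw [geo, slerp_zero _ (Sph.norm x), toSph_coe]

lemma geo_one (x p : Sph n) : geo 1 x p = p := by
  rw [geo, slerp_one _ (Sph.norm p), toSph_coe]

lemma coe_ne_neg {x p : Sph n} (h : x ≠ -p) :
    (x : EuclideanSpace ℝ (Fin (n + 1))) ≠ -(p : EuclideanSpace ℝ (Fin (n + 1))) :=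
  fun h' => h (Subtype.ext h')

lemma continuousOn_geo {α : Type*} [TopologicalSpace α] {S : Set α} {t : α → ℝ} {x p : α → Sph n}
    (ht : ContinuousOn t S) (hx : ContinuousOn x S) (hp : ContinuousOn p S)
    (h : ∀ a ∈ S, t a ∈ Icc (0 : ℝ) 1 ∧ x a ≠ -p a) :
    ContinuousOn (fun a => geo (t a) (x a) (p a)) S :=
  continuousOn_toSph (continuousOn_slerp ht (continuous_subtype_val.comp_continuousOn hx)
    (continuous_subtype_val.comp_continuousOn hp) fun a ha =>
      ⟨(h a ha).1, Sph.norm _, Sph.norm _, coe_ne_neg (h a ha).2⟩)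
    fun a ha => norm_slerp (h a ha).1 (Sph.norm _) (Sph.norm _) (coe_ne_neg (h a ha).2)

/-- A path from `x ≠ u` to the antipode of `u` avoids `u`. -/
lemma geo_neg_ne {t : ℝ} (ht : t ∈ Icc (0 : ℝ) 1) {x u : Sph n} (h : x ≠ u) :
    geo t x (-u) ≠ u := by
  intro h0
  have hne : x ≠ -(-u) := by rwa [neg_neg]
  have hx := Sph.norm x
  have hu := Sph.norm u
  have hmu := Sph.norm (-u)
  have h1 := congrArg Subtype.val h0
  have h3 := lerp_ne_zero ht hx hmu (coe_ne_neg hne)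
  rw [geo, coe_toSph (norm_slerp ht hx hmu (coe_ne_neg hne)), slerp] at h1
  set c := ‖(1 - t) • (x : EuclideanSpace ℝ (Fin (n + 1))) +
    t • ((-u : Sph n) : EuclideanSpace ℝ (Fin (n + 1)))‖ with hc
  have hc0 : 0 < c := norm_pos_iff.2 h3
  rw [inv_smul_eq_iff₀ hc0.ne'] at h1
  have h4 : (1 - t) • (x : EuclideanSpace ℝ (Fin (n + 1))) = (c + t) • (u : EuclideanSpace ℝ (Fin (n + 1))) := by
    rw [add_smul, ← h1]
    have : ((-u : Sph n) : EuclideanSpace ℝ (Fin (n + 1))) = -u := rfl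
    rw [this]; module
  have h5 := congrArg norm h4
  rw [norm_smul, norm_smul, hx, hu, Real.norm_of_nonneg (by linarith [ht.2]),
    Real.norm_of_nonneg (by linarith [ht.1]), mul_one, mul_one] at h5
  rw [h5] at h4
  exact h (Subtype.ext (smul_right_injective _ (by linarith [ht.1] : c + t ≠ 0) h4))

variable {X Y : Type*} [MetricSpace X] [CompactSpace X] [MetricSpace Y]

lemma Fine.push_cont {f : X → Y} (hf : Continuous f) {ε : ℝ} (hε : 0 < ε) :
    ∃ δ > 0, ∀ (A : Set X) (L : ℕ), ∀ z ∈ Fine A δ L, Ch.push f z ∈ Fine (f '' A) ε L := by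
  obtain ⟨δ, hδ, h⟩ := Metric.uniformContinuous_iff.1
    (CompactSpace.uniformContinuous_of_continuous hf) ε hε
  exact ⟨δ, hδ, fun A L z hz => Fine.push (fun x hx => mem_image_of_mem f hx)
    (fun x _ y _ hxy => h hxy) hz⟩

lemma Bds.push_cont {f : X → Y} (hf : Continuous f) {ε : ℝ} (hε : 0 < ε) :
    ∃ δ > 0, ∀ (L : ℕ) (z), Bds univ δ L z → Bds univ ε L (Ch.push f z) := by
  obtain ⟨δ, hδ, h⟩ := Metric.uniformContinuous_iff.1
    (CompactSpace.uniformContinuous_of_continuous hf) ε hε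
  exact ⟨δ, hδ, fun L z hz => Bds.push (fun x _ => mem_univ _) (fun x _ y _ hxy => h hxy) hz⟩

/-- A product of `n + 1` characters `G → ℤ/2` vanishes in the cohomology of `Sⁿ / G`: there are
0-cochains `sᵢ` on `Sⁿ` with character `κᵢ` for which the product of their coboundaries vanishes on all
fine chains of dimension `n + 1`. -/
lemma exists_cup_vanishing {G : Type*} [Group G] [Finite G] [MulAction G (Sph n)]
    [ContinuousConstSMul G (Sph n)] (hfree : ∀ g : G, g ≠ 1 → ∀ x : Sph n, g • x ≠ x)
    (κ : Fin (n + 1) → G → ZMod 2) (hκ : ∀ i g h, κ i (g * h) = κ i g + κ i h) :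
    ∃ s : Fin (n + 1) → Sph n → ZMod 2, (∀ i (g : G) x, s i (g • x) = κ i g + s i x) ∧
      ∃ ε > 0, ∀ E ∈ Fine (univ : Set (Sph n)) ε (n + 2), cup (List.ofFn s) E = 0 := by
  obtain ⟨s, hs, ε, hε, h⟩ := exists_signs κ hfree
    (fun F hF η hη => exists_nonvanishing_near F hF hη) hκ
  refine ⟨s, hs, ε, hε, fun E hE => ?_⟩
  have := map_mem_of_supported (cup (List.ofFn s)) ⊥ _ (fun l hl => ?_) hE
  · simpa using this
  · rw [Submodule.mem_bot]
    refine cup_vanish _ _ (by rw [hl.1]; simp) ?_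
    rcases h l hl.2.2 with rfl | ⟨i, hi⟩
    · have := hl.1; simp at this
    · exact ⟨s i, List.mem_ofFn.2 ⟨i, rfl⟩, hi⟩

lemma weight_add_push {X : Type*} {s : X → ZMod 2} {ss : List (X → ZMod 2)} {T : X → X} {c : ZMod 2}
    (hs : ∀ x, s (T x) = c + s x) (hss : ∀ r ∈ ss, ∃ c, ∀ x, r (T x) = c + r x) (z : Ch X) :
    weight s (cup ss) (z + push T z) = c * cup ss z := by
  rw [map_add, weight_push s (cup ss) T c hs (cup_push T ss hss) (cup_nil_list ss)]
  rw [add_left_comm, CharTwo.add_self_eq_zero, add_zero]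

/-! ### The Klein four-group -/

/-- Partial equivariant chains for the commuting pair `S, T`: chains `e_L`, `d_L` with `L + 1` vertices
and `∂ e_{L+1} = e_L + T e_L`, `∂ d_{L+1} = d_L + T d_L + e_L + S e_L`, built by filling cycles as long as
the sphere is acyclic. A product of `L` cochains that are odd under `T` and even under `S` takes the
value `1` on `e_L` and `0` on `d_L`. -/
lemma klein_chains {S T : Sph n → Sph n} (hS : Continuous S) (hT : Continuous T)
    (hTT : ∀ x, T (T x) = x) (hST : ∀ x, S (T x) = T (S x)) (L : ℕ) (hL : L < n + 1) :
    ∀ ε > 0, ∃ e ∈ Fine (univ : Set (Sph n)) ε (L + 1), ∃ d ∈ Fine (univ : Set (Sph n)) ε (L + 1),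
      bd (e + push T e) = 0 ∧ bd ((d + push T d) + (e + push S e)) = 0 ∧
      ∀ ss : List (Sph n → ZMod 2), ss.length = L →
        (∀ s ∈ ss, ∀ x, s (T x) = 1 + s x ∧ s (S x) = 0 + s x) → cup ss e = 1 ∧ cup ss d = 0 := by
  induction L with
  | zero =>
    intro ε hε
    refine ⟨Finsupp.single [toSph 0] 1, Finsupp.single_mem_supported _ _
      ⟨rfl, by simp, by simpa using hε⟩, 0, zero_mem _, ?_, ?_, fun ss hss _ => ?_⟩
    · simp [bdL, ZModModule.add_self]
    · simp [bdL, ZModModule.add_self]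
    · rw [List.length_eq_zero_iff.1 hss]; simp [cup]
  | succ L ih =>
    intro ε hε
    obtain ⟨δ, hδ, hb, -⟩ := sphProp_Sph n ε hε
    obtain ⟨δ₁, hδ₁, hT₁⟩ := Fine.push_cont hT hδ
    obtain ⟨δ₂, hδ₂, hS₂⟩ := Fine.push_cont hS hδ
    obtain ⟨e, he, d, hd, h1, h2, h3⟩ := ih (by omega) (min δ (min δ₁ δ₂)) (by positivity)
    have m0 : ∀ z ∈ Fine (univ : Set (Sph n)) (min δ (min δ₁ δ₂)) (L + 1),
        z ∈ Fine univ δ (L + 1) ∧ push T z ∈ Fine univ δ (L + 1) ∧ push S z ∈ Fine univ δ (L + 1) :=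
      fun z hz => ⟨Fine.mono subset_rfl (min_le_left _ _) hz,
        Fine.mono (subset_univ _) le_rfl (hT₁ _ _ _ (Fine.mono subset_rfl
          ((min_le_right _ _).trans (min_le_left _ _)) hz)),
        Fine.mono (subset_univ _) le_rfl (hS₂ _ _ _ (Fine.mono subset_rfl
          ((min_le_right _ _).trans (min_le_right _ _)) hz))⟩
    obtain ⟨e1, e2, e3⟩ := m0 e he
    obtain ⟨d1, d2, d3⟩ := m0 d hd
    obtain ⟨e', he', hbe⟩ := hb (L + 1) hL _ (add_mem e1 e2) h1
    obtain ⟨d', hd', hbd⟩ := hb (L + 1) hL _ (add_mem (add_mem d1 d2) (add_mem e1 e3)) h2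
    refine ⟨e', he', d', hd', ?_, ?_, fun ss hss hodd => ?_⟩
    · rw [map_add, bd_push, hbe, map_add, push_push_self T hTT, add_comm (push T e),
        ZModModule.add_self]
    · simp only [map_add, bd_push, hbe, hbd, push_push_self T hTT]
      have hc : push S (push T e) = push T (push S e) := by
        rw [push_push, push_push]; congr 2; funext x; exact hST x
      rw [hc]
      have a1 := ZModModule.add_self e
      have a2 := ZModModule.add_self d
      have a3 := ZModModule.add_self (push T d)
      have a4 := ZModModule.add_self (push T e)
      have a5 := ZModModule.add_self (push S e)
      have a6 := ZModModule.add_self (push T (push S e))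
      linear_combination (norm := module) a1 + a2 + a3 + a4 + a5 + a6
    · rcases ss with _ | ⟨s, ss⟩
      · simp at hss
      obtain ⟨c1, c2⟩ := h3 ss (by simpa using hss) fun r hr => hodd r (by simp [hr])
      have oT : ∀ r ∈ ss, ∃ c, ∀ x, r (T x) = c + r x := fun r hr =>
        ⟨1, fun x => (hodd r (by simp [hr]) x).1⟩
      have oS : ∀ r ∈ ss, ∃ c, ∀ x, r (S x) = c + r x := fun r hr =>
        ⟨0, fun x => (hodd r (by simp [hr]) x).2⟩
      have sT : ∀ x, s (T x) = 1 + s x := fun x => (hodd s (by simp) x).1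
      have sS : ∀ x, s (S x) = 0 + s x := fun x => (hodd s (by simp) x).2
      simp only [cup, LinearMap.comp_apply, hbe, hbd]
      refine ⟨by rw [weight_add_push sT oT, c1, one_mul], ?_⟩
      rw [map_add, weight_add_push sT oT, weight_add_push sS oS, c2, c1, mul_zero, zero_mul, add_zero]

/-- The group `(ℤ/2)²` does not act freely on `Sⁿ`. One of the top-dimensional cycles `e + Te`,
`d + Td + e + Se` and their sum bounds, but the cocycles `κⁿ⁺¹` and `κ' κⁿ`, which vanish on boundaries
of fine chains, together detect all three. -/
theorem no_klein {G : Type*} [Group G] [Finite G] [MulAction G (Sph n)]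
    [ContinuousConstSMul G (Sph n)] (hfree : ∀ g : G, g ≠ 1 → ∀ x : Sph n, g • x ≠ x)
    (S T : G) (hTT : T * T = 1) (hST : S * T = T * S) (κ κ' : G → ZMod 2)
    (hκ : ∀ g h, κ (g * h) = κ g + κ h) (hκ' : ∀ g h, κ' (g * h) = κ' g + κ' h)
    (h1 : κ T = 1) (h2 : κ S = 0) (h3 : κ' T = 0) (h4 : κ' S = 1) : False := by
  obtain ⟨s, hs, ε₁, hε₁, v₁⟩ := exists_cup_vanishing hfree (fun _ => κ) (fun _ => hκ)
  obtain ⟨t, ht, ε₂, hε₂, v₂⟩ := exists_cup_vanishing hfree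
    (Fin.cons κ' fun _ => κ) (fun i => by
      refine Fin.cases ?_ (fun i => ?_) i
      · simpa using hκ'
      · simpa using hκ)
  have ht0 : ∀ g x, t 0 (g • x) = κ' g + t 0 x := fun g x => ht 0 g x
  have htt : ∀ (i : Fin n) g x, t i.succ (g • x) = κ g + t i.succ x := fun i g x => ht i.succ g x
  obtain ⟨δ, hδ, -, hb⟩ := sphProp_Sph n (min ε₁ ε₂) (by positivity)
  have hTc : Continuous fun x : Sph n => T • x := continuous_const_smul T
  have hSc : Continuous fun x : Sph n => S • x := continuous_const_smul S
  obtain ⟨δ₁, hδ₁, hT₁⟩ := Fine.push_cont hTc hδ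
  obtain ⟨δ₂, hδ₂, hS₂⟩ := Fine.push_cont hSc hδ
  obtain ⟨e, he, d, hd, c1, c2, c3⟩ := klein_chains hSc hTc
    (fun x => by rw [smul_smul, hTT, one_smul]) (fun x => by rw [smul_smul, smul_smul, hST]) n
    (by omega) (min δ (min δ₁ δ₂)) (by positivity)
  have m0 : ∀ z ∈ Fine (univ : Set (Sph n)) (min δ (min δ₁ δ₂)) (n + 1),
      z ∈ Fine univ δ (n + 1) ∧ push (fun x => T • x) z ∈ Fine univ δ (n + 1) ∧
        push (fun x => S • x) z ∈ Fine univ δ (n + 1) :=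
    fun z hz => ⟨Fine.mono subset_rfl (min_le_left _ _) hz,
      Fine.mono (subset_univ _) le_rfl (hT₁ _ _ _ (Fine.mono subset_rfl
        ((min_le_right _ _).trans (min_le_left _ _)) hz)),
      Fine.mono (subset_univ _) le_rfl (hS₂ _ _ _ (Fine.mono subset_rfl
        ((min_le_right _ _).trans (min_le_right _ _)) hz))⟩
  obtain ⟨e1, e2, e3⟩ := m0 e he
  obtain ⟨d1, d2, d3⟩ := m0 d hd
  have pair : ∀ r : Fin (n + 1) → Sph n → ZMod 2,
      (∀ (i : Fin n) g x, r i.succ (g • x) = κ g + r i.succ x) → ∀ a b : ZMod 2,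
      (∀ x, r 0 (T • x) = a + r 0 x) → (∀ x, r 0 (S • x) = b + r 0 x) →
      weight (r 0) (cup (List.ofFn fun i : Fin n => r i.succ))
        (e + push (fun x => T • x) e) = a ∧
      weight (r 0) (cup (List.ofFn fun i : Fin n => r i.succ))
        ((d + push (fun x => T • x) d) + (e + push (fun x => S • x) e)) = b := by
    intro r hr a b ha hb
    have hm : ∀ q ∈ List.ofFn fun i : Fin n => r i.succ, ∀ (g : G) x, q (g • x) = κ g + q x := by
      intro q hq
      obtain ⟨i, rfl⟩ := List.mem_ofFn.1 hq
      exact hr i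
    obtain ⟨q1, q2⟩ := c3 (List.ofFn fun i : Fin n => r i.succ) (by simp) fun q hq x =>
      ⟨by rw [hm q hq, h1], by rw [hm q hq, h2]⟩
    have oT : ∀ q ∈ List.ofFn fun i : Fin n => r i.succ, ∃ c, ∀ x, q (T • x) = c + q x :=
      fun q hq => ⟨_, hm q hq T⟩
    have oS : ∀ q ∈ List.ofFn fun i : Fin n => r i.succ, ∃ c, ∀ x, q (S • x) = c + q x :=
      fun q hq => ⟨_, hm q hq S⟩
    refine ⟨by rw [weight_add_push ha oT, q1, mul_one], ?_⟩
    rw [map_add, weight_add_push ha oT, weight_add_push hb oS, q1, q2, mul_zero, mul_one, zero_add]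
  obtain ⟨p1, p2⟩ := pair s (fun i g x => hs i.succ g x) 1 0 (fun x => by rw [hs, h1])
    (fun x => by rw [hs, h2])
  obtain ⟨-, p4⟩ := pair t htt 0 1 (fun x => by rw [ht0, h3]) (fun x => by rw [ht0, h4])
  rw [List.ofFn_succ] at v₁ v₂
  rcases hb _ (add_mem e1 e2) _ (add_mem (add_mem d1 d2) (add_mem e1 e3)) c1 c2 with
    ⟨E, hE, hEb⟩ | ⟨E, hE, hEb⟩ | ⟨E, hE, hEb⟩
  · have := v₁ E (Fine.mono subset_rfl (min_le_left _ _) hE)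
    rw [cup, LinearMap.comp_apply, hEb, p1] at this
    exact one_ne_zero this
  · have := v₂ E (Fine.mono subset_rfl (min_le_right _ _) hE)
    rw [cup, LinearMap.comp_apply, hEb, p4] at this
    exact one_ne_zero this
  · have := v₁ E (Fine.mono subset_rfl (min_le_left _ _) hE)
    rw [cup, LinearMap.comp_apply, hEb, map_add, p1, p2, add_zero] at this
    exact one_ne_zero this

end Ch

/-! ### Milnor's argument -/

namespace Ch
variable {n : ℕ}

/-- The pairs `(u, v)` with `T v ≠ u`: the complement of the graph of the involution `T`. -/
def offGraph (T : Sph n → Sph n) : Set (Sph n × Sph n) := {p | T p.2 ≠ p.1}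

/-- The complement of the graph of `T` has no homology below the dimension of the sphere. For fixed `u`,
the point `T v ≠ u` moves along a great circle to `-u`; thus the complement deforms onto the graph of
`u ↦ T (-u)`, a copy of the sphere. -/
lemma offGraph_acyclic {T : Sph n → Sph n} (hT : Continuous T) (hTT : ∀ x, T (T x) = x)
    {K : Set (Sph n × Sph n)} (hK : IsCompact K) (hKT : K ⊆ offGraph T) :
    ∃ K' : Set (Sph n × Sph n), IsCompact K' ∧ K' ⊆ offGraph T ∧ ∀ ε > 0, ∃ δ > 0,
      ∀ L < n + 1, ∀ z ∈ Fine K δ L, bd z = 0 → Bds K' ε L z := by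
  set H : ℝ → Sph n × Sph n → Sph n × Sph n := fun t p => (p.1, T (geo t (T p.2) (-p.1))) with hH
  set j : Sph n → Sph n × Sph n := fun u => (u, T (-u)) with hj
  have hjc : Continuous j := by fun_prop
  have hHc : ContinuousOn (fun q : ℝ × (Sph n × Sph n) => H q.1 q.2) (Icc 0 1 ×ˢ K) := by
    have := continuousOn_geo (S := Icc (0 : ℝ) 1 ×ˢ K) (t := fun q => q.1)
      (x := fun q => T q.2.2) (p := fun q => -q.2.1) continuousOn_fst (by fun_prop) (by fun_prop)
      (fun a ha => ⟨ha.1, by rw [neg_neg]; exact hKT ha.2⟩)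
    exact ContinuousOn.prodMk (by fun_prop) (hT.comp_continuousOn this)
  refine ⟨((fun q : ℝ × (Sph n × Sph n) => H q.1 q.2) '' (Icc 0 1 ×ˢ K)) ∪ range j,
    ((isCompact_Icc.prod hK).image_of_continuousOn hHc).union (isCompact_range hjc), ?_, ?_⟩
  · rintro _ (⟨⟨t, p⟩, ⟨ht, hp⟩, rfl⟩ | ⟨u, rfl⟩)
    · simp only [offGraph, hH, mem_ofPred_eq, hTT]
      exact geo_neg_ne ht (hKT hp)
    · simp only [offGraph, hj, mem_ofPred_eq, hTT]
      exact (ne_neg_of_mem_unit_sphere ℝ u).symm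
  · intro ε hε
    set K' := ((fun q : ℝ × (Sph n × Sph n) => H q.1 q.2) '' (Icc 0 1 ×ˢ K)) ∪ range j
    obtain ⟨δ₁, hδ₁, h1⟩ := homotopy (B := K') hK H hHc
      (fun t ht x hx => Or.inl ⟨(t, x), ⟨ht, hx⟩, rfl⟩) hε
    obtain ⟨δ₂, hδ₂, h2⟩ := Metric.uniformContinuous_iff.1
      (CompactSpace.uniformContinuous_of_continuous hjc) ε hε
    obtain ⟨δ₃, hδ₃, h3, -⟩ := sphProp_Sph n δ₂ hδ₂
    refine ⟨min δ₁ δ₃, by positivity, fun L hL z hz hz0 => ?_⟩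
    have a := h1 L z (Fine.mono subset_rfl (min_le_left _ _) hz) hz0
    have e0 : push (H 0) z = z := by
      rw [show H 0 = id by funext p; simp [hH, geo_zero, hTT], push_id]
    have e1 : push (H 1) z = push j (push Prod.fst z) := by
      rw [push_push]; congr 2; funext p; simp [hH, hj, geo_one]
    have b := h3 L hL (push Prod.fst z) (Fine.push (fun _ _ => mem_univ _)
      (fun x _ y _ hxy => (le_max_left _ _).trans_lt hxy)
      (Fine.mono subset_rfl (min_le_right δ₁ δ₃) hz)) (by rw [bd_push, hz0, map_zero])
    have c : Bds K' ε L (push j (push Prod.fst z)) :=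
      Bds.push (f := j) (A := univ) (δ := δ₂) (fun x _ => Or.inr ⟨x, rfl⟩) (fun x _ y _ hxy => h2 hxy) b
    have d := a.add c
    rwa [e0, e1, add_assoc, ZModModule.add_self, add_zero] at d

/-- The inductive construction in Milnor's argument. The chains `e_L` satisfy
`∂ e_{L+1} = e_L + T e_L`, and the cycle `F (e_L + T e_L)`, with `F x = (f x, f (T x))`, is of the form
`y + swap y` for a cycle `y` in the complement of the graph of `T`. If `y = ∂ s` there, then
`F e_{L+1} + s + swap s` is the cycle of the next dimension. -/
lemma milnor_chains {T f : Sph n → Sph n} (hT : Continuous T) (hf : Continuous f)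
    (hTT : ∀ x, T (T x) = x) (hT0 : ∀ x, T x ≠ x) (hfT : ∀ x, f (T x) ≠ T (f x)) (L : ℕ)
    (hL : L < n + 1) :
    ∃ K : Set (Sph n × Sph n), IsCompact K ∧ K ⊆ offGraph T ∧ ∀ ε > 0,
      ∃ e ∈ Fine (univ : Set (Sph n)) ε (L + 1), ∃ y ∈ Fine K ε (L + 1),
      bd (e + push T e) = 0 ∧ bd y = 0 ∧
      push (fun x => (f x, f (T x))) (e + push T e) = y + push Prod.swap y ∧
      ∀ ss : List (Sph n → ZMod 2), ss.length = L →
        (∀ s ∈ ss, ∀ x, s (T x) = 1 + s x) → cup ss e = 1 := by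
  set F : Sph n → Sph n × Sph n := fun x => (f x, f (T x)) with hF
  have hFc : Continuous F := by fun_prop
  have hFo : ∀ x, F x ∈ offGraph T := fun x h => hfT x (by
    have h' : T (f (T x)) = f x := h
    rw [← h', hTT])
  have hFT : Prod.swap ∘ F = F ∘ T := by
    funext x; simp [hF, hTT]
  induction L with
  | zero =>
    set x₀ : Sph n := toSph 0
    refine ⟨{F x₀, (x₀, x₀)}, (Set.toFinite _).isCompact, ?_, fun ε hε => ?_⟩
    · rintro _ (rfl | rfl)
      exacts [hFo x₀, hT0 x₀]
    refine ⟨Finsupp.single [x₀] 1, Finsupp.single_mem_supported _ _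
      ⟨rfl, by simp, by simpa using hε⟩, Finsupp.single [F x₀] 1 + Finsupp.single [(x₀, x₀)] 1,
      add_mem (Finsupp.single_mem_supported _ _ ⟨rfl, by simp, by simpa using hε⟩)
      (Finsupp.single_mem_supported _ _ ⟨rfl, by simp, by simpa using hε⟩), ?_, ?_, ?_,
      fun ss hss _ => ?_⟩
    · simp [bdL, ZModModule.add_self]
    · simp [bdL, ZModModule.add_self]
    · have h1 : Prod.swap (F x₀) = F (T x₀) := congrFun hFT x₀
      simp only [map_add, push_single, List.map_cons, List.map_nil, h1, Prod.swap_prod_mk]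
      have := ZModModule.add_self (Finsupp.single [(x₀, x₀)] (1 : ZMod 2))
      linear_combination (norm := module) -this
    · rw [List.length_eq_zero_iff.1 hss]; simp [cup]
  | succ L ih =>
    obtain ⟨K, hK, hKT, h⟩ := ih (by omega)
    obtain ⟨K', hK', hKT', hac⟩ := offGraph_acyclic hT hTT hK hKT
    refine ⟨K' ∪ Prod.swap '' K' ∪ range F, (hK'.union (hK'.image continuous_swap)).union
      (isCompact_range hFc), ?_, fun ε hε => ?_⟩
    · rintro _ ((h | ⟨p, h, rfl⟩) | ⟨x, rfl⟩)
      · exact hKT' h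
      · exact fun h' => hKT' h (by
          have h'' : T p.1 = p.2 := h'
          rw [← h'', hTT])
      · exact hFo x
    obtain ⟨δ₀, hδ₀, hF₀⟩ := Fine.push_cont hFc hε
    obtain ⟨δ₁, hδ₁, hb, -⟩ := sphProp_Sph n (min ε δ₀) (by positivity)
    obtain ⟨δ₂, hδ₂, hT₂⟩ := Fine.push_cont hT hδ₁
    obtain ⟨δ₃, hδ₃, h3⟩ := hac ε hε
    obtain ⟨e, he, y, hy, h1, h2, h4, h5⟩ := h (min δ₁ (min δ₂ δ₃)) (by positivity)
    obtain ⟨e', he', hbe⟩ := hb (L + 1) hL _ (add_mem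
      (Fine.mono subset_rfl (min_le_left _ _) he) (Fine.mono (subset_univ _) le_rfl
        (hT₂ _ _ _ (Fine.mono subset_rfl ((min_le_right _ _).trans (min_le_left _ _)) he)))) h1
    obtain ⟨s, hs, hbs⟩ := h3 (L + 1) hL y
      (Fine.mono subset_rfl ((min_le_right _ _).trans (min_le_right _ _)) hy) h2
    have hs₁ : s ∈ Fine (K' ∪ Prod.swap '' K' ∪ range F) ε (L + 1 + 1) :=
      Fine.mono (fun x hx => Or.inl (Or.inl hx)) le_rfl hs
    have hs₂ : push Prod.swap s ∈ Fine (K' ∪ Prod.swap '' K' ∪ range F) ε (L + 1 + 1) :=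
      Fine.push (f := Prod.swap) (A := K') (δ := ε) (fun x hx => Or.inl (Or.inr ⟨x, hx, rfl⟩))
        (fun x _ y _ hxy => by
          rw [Prod.dist_eq] at hxy ⊢
          exact (max_comm _ _).trans_lt hxy) hs
    have hFe : push F e' ∈ Fine (K' ∪ Prod.swap '' K' ∪ range F) ε (L + 1 + 1) :=
      Fine.mono (by rw [image_univ]; exact subset_union_right) le_rfl
        (hF₀ _ _ _ (Fine.mono subset_rfl (min_le_right _ _) he'))
    refine ⟨e', Fine.mono subset_rfl (min_le_left _ _) he', push F e' + (s + push Prod.swap s),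
      add_mem hFe (add_mem hs₁ hs₂), ?_, ?_, ?_, fun ss hss hodd => ?_⟩
    · rw [map_add, bd_push, hbe, map_add, push_push_self T hTT, add_comm (push T e),
        ZModModule.add_self]
    · rw [map_add, map_add, bd_push, bd_push, hbe, hbs, h4, ZModModule.add_self]
    · simp only [map_add]
      rw [push_push_self Prod.swap Prod.swap_swap, push_push, push_push, hFT]
      have a1 := ZModModule.add_self s
      have a2 := ZModModule.add_self (push Prod.swap s)
      linear_combination (norm := module) -a1 - a2
    · rcases ss with _ | ⟨r, ss⟩
      · simp at hss
      have c1 := h5 ss (by simpa using hss) fun r hr => hodd r (by simp [hr])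
      rw [cup, LinearMap.comp_apply, hbe, weight_add_push (hodd r (by simp))
        (fun q hq => ⟨1, hodd q (by simp [hq])⟩), c1, one_mul]

/-- Milnor's theorem, in the form needed here: an involution `T` in a group acting freely on a sphere
commutes with every element of the group. The homomorphism `κ` with `κ T = 1` is an additional
assumption that provides the cochains detecting `e + Te`. -/
theorem no_noncommuting {G : Type*} [Group G] [Finite G] [MulAction G (Sph n)]
    [ContinuousConstSMul G (Sph n)] (hfree : ∀ g : G, g ≠ 1 → ∀ x : Sph n, g • x ≠ x)
    (g T : G) (hT1 : T ≠ 1) (hTT : T * T = 1) (hgT : g * T ≠ T * g) (κ : G → ZMod 2)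
    (hκ : ∀ g h, κ (g * h) = κ g + κ h) (h1 : κ T = 1) : False := by
  obtain ⟨s, hs, ε₀, hε₀, v⟩ := exists_cup_vanishing hfree (fun _ => κ) (fun _ => hκ)
  have hTc : Continuous fun x : Sph n => T • x := continuous_const_smul T
  have hfc : Continuous fun x : Sph n => g • x := continuous_const_smul g
  have hgc : Continuous fun x : Sph n => g⁻¹ • x := continuous_const_smul g⁻¹
  have hTi : ∀ x : Sph n, T • T • x = x := fun x => by rw [smul_smul, hTT, one_smul]
  have hfT : ∀ x : Sph n, g • T • x ≠ T • g • x := fun x h => by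
    refine hfree ((T * g)⁻¹ * (g * T)) (fun h' => hgT ?_) x ?_
    · rw [inv_mul_eq_one] at h'; exact h'.symm
    · rw [mul_smul, mul_smul g, h, ← mul_smul T, inv_smul_smul]
  obtain ⟨K, hK, hKT, hch⟩ := milnor_chains hTc hfc hTi (hfree T hT1) hfT n (by omega)
  -- the first projection of the complement of the graph is homotopic to `θ` after the second one,
  -- because `T v ≠ u` allows the great-circle path from `u` to `-T v`
  set θ : Sph n → Sph n := fun x => -(T • x) with hθ
  set θ' : Sph n → Sph n := fun x => T • (-x) with hθ'
  have hθc : Continuous θ := hTc.neg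
  have hθc' : Continuous θ' := hTc.comp continuous_neg
  have hθθ : ∀ x, θ' (θ x) = x := fun x => by simp only [hθ, hθ', neg_neg, hTi]
  obtain ⟨ε₁, hε₁, hg₁⟩ := Bds.push_cont hgc hε₀
  obtain ⟨ε₂, hε₂, hθ₂⟩ := Bds.push_cont hθc' hε₁
  obtain ⟨ε₃, hε₃, hθ₃⟩ := Bds.push_cont hθc (lt_min hε₁ hε₂)
  obtain ⟨δ₁, hδ₁, -, hb⟩ := sphProp_Sph n (min ε₃ (min ε₁ ε₂)) (by positivity)
  obtain ⟨δ₂, hδ₂, hh⟩ := homotopy (A := K) (B := univ) (ε := min ε₁ ε₂) hK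
    (fun t p => geo t p.1 (θ p.2))
    (continuousOn_geo continuousOn_fst (by fun_prop) (by fun_prop)
      (fun a ha => ⟨ha.1, by simp only [hθ, neg_neg]; exact fun h => hKT ha.2 h.symm⟩))
    (fun _ _ _ _ => mem_univ _) (by positivity)
  obtain ⟨e, he, y, hy, c1, c2, c3, c4⟩ := hch (min δ₁ δ₂) (by positivity)
  have hy₁ := Fine.mono subset_rfl (min_le_left δ₁ δ₂) hy
  have hp := hh _ y (Fine.mono subset_rfl (min_le_right δ₁ δ₂) hy) c2
  set y₁ := push Prod.fst y with hy₁d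
  set y₂ := push Prod.snd y with hy₂d
  have e0 : push (fun p : Sph n × Sph n => geo 0 p.1 (θ p.2)) y = y₁ := by
    rw [hy₁d]; congr 2; funext p; exact geo_zero _ _
  have e1 : push (fun p : Sph n × Sph n => geo 1 p.1 (θ p.2)) y = push θ y₂ := by
    rw [hy₂d, push_push]; congr 2; funext p; exact geo_one _ _
  rw [e0, e1] at hp
  have hθy : push θ' (push θ y₂) = y₂ := by
    rw [push_push, show θ' ∘ θ = id from funext hθθ, push_id]
  have hsum : push (fun x => g • x) (e + push (fun x => T • x) e) = y₁ + y₂ := by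
    have h := congrArg (push Prod.fst) c3
    rw [map_add (push Prod.fst) y, push_push, push_push] at h
    exact h
  have f₁ : y₁ ∈ Fine (univ : Set (Sph n)) δ₁ (n + 1) := Fine.push (fun _ _ => mem_univ _)
    (fun x _ y _ hxy => (le_max_left _ _).trans_lt hxy) hy₁
  have f₂ : y₂ ∈ Fine (univ : Set (Sph n)) δ₁ (n + 1) := Fine.push (fun _ _ => mem_univ _)
    (fun x _ y _ hxy => (le_max_right _ _).trans_lt hxy) hy₁
  have hbd : Bds univ ε₁ (n + 1) (y₁ + y₂) := by
    rcases hb y₁ f₁ y₂ f₂ (by rw [hy₁d, bd_push, c2, map_zero])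
      (by rw [hy₂d, bd_push, c2, map_zero]) with h | h | h
    · -- `y₁` bounds, hence so does the homologous `θ y₂`, hence so does `y₂`
      have h' : Bds univ ε₂ (n + 1) (push θ y₂) := by
        have := (h.mono subset_rfl (min_le_right _ _)).add hp
        rw [← add_assoc, ZModModule.add_self, zero_add] at this
        exact this.mono subset_rfl (min_le_right _ _)
      have := hθ₂ _ _ h'
      rw [hθy] at this
      exact (h.mono subset_rfl ((min_le_right _ _).trans (min_le_left _ _))).add this
    · have h' := (hθ₃ _ _ (h.mono subset_rfl (min_le_left _ _)))
      have := hp.add h'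
      rw [add_assoc, ZModModule.add_self, add_zero] at this
      exact (this.mono subset_rfl (min_le_left _ _)).add
        (h.mono subset_rfl ((min_le_right _ _).trans (min_le_left _ _)))
    · exact h.mono subset_rfl ((min_le_right _ _).trans (min_le_left _ _))
  rw [← hsum] at hbd
  have hZ := hg₁ _ _ hbd
  rw [push_push, show ((fun x : Sph n => g⁻¹ • x) ∘ fun x => g • x) = id from
    funext fun x => inv_smul_smul g x, push_id] at hZ
  obtain ⟨E, hE, hEb⟩ := hZ
  have h0 := v E hE
  have odd : ∀ i x, s i (T • x) = 1 + s i x := fun i x => by rw [hs, h1]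
  have oT : ∀ q ∈ List.ofFn fun i : Fin n => s i.succ, ∀ x, q (T • x) = 1 + q x := by
    intro q hq
    obtain ⟨i, rfl⟩ := List.mem_ofFn.1 hq
    exact odd i.succ
  rw [List.ofFn_succ, cup, LinearMap.comp_apply, hEb, weight_add_push (odd 0)
    (fun q hq => ⟨1, oT q hq⟩), c4 _ (by simp) oT, one_mul] at h0
  exact one_ne_zero h0
end Ch

end

/-! ### The dihedral group -/

/-- The homomorphism to `ℤ/2` that sends rotations to `0` and reflections to `1`. -/
def reflParity {m : ℕ} : DihedralGroup m → ZMod 2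
  | .r _ => 0
  | .sr _ => 1

/-- The homomorphism of the Klein four-group `D₂` to `ℤ/2` that is `1` on `r 1` and `sr 1`. -/
def indexParity : DihedralGroup 2 → ZMod 2
  | .r i => i
  | .sr i => i

lemma reflParity_mul {m : ℕ} (g h : DihedralGroup m) :
    reflParity (g * h) = reflParity g + reflParity h := by
  rcases g with i | i <;> rcases h with j | j <;> simp [reflParity, CharTwo.add_self_eq_zero]

lemma indexParity_mul : ∀ g h : DihedralGroup 2,
    indexParity (g * h) = indexParity g + indexParity h := by
  rintro (i | i) (j | j) <;> simp [indexParity, CharTwo.sub_eq_add, add_comm]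

/-- The dihedral group of order `2m` (for `m ≥ 2`) admits no free continuous action on
any sphere `Sⁿ`. -/
theorem no_free_action_of_dihedral (m : ℕ) (hm : 2 ≤ m) (n : ℕ) :
    ¬ ∃ ρ : DihedralGroup m →*
        (Metric.sphere (0 : EuclideanSpace ℝ (Fin (n + 1))) 1 ≃ₜ
          Metric.sphere (0 : EuclideanSpace ℝ (Fin (n + 1))) 1),
      ∀ g : DihedralGroup m, g ≠ 1 →
        ∀ x : Metric.sphere (0 : EuclideanSpace ℝ (Fin (n + 1))) 1, ρ g x ≠ x := by
  rintro ⟨ρ, hρ⟩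
  have : NeZero m := ⟨by omega⟩
  let : MulAction (DihedralGroup m) (Sph n) :=
    { smul := fun g x => ρ g x
      one_smul := fun x => by
        change ρ 1 x = x
        rw [map_one]; rfl
      mul_smul := fun g h x => by
        change ρ (g * h) x = ρ g (ρ h x)
        rw [map_mul]; rfl }
  have : ContinuousConstSMul (DihedralGroup m) (Sph n) := ⟨fun g => (ρ g).continuous⟩
  have hfree : ∀ g : DihedralGroup m, g ≠ 1 → ∀ x : Sph n, g • x ≠ x := hρ
  rcases hm.eq_or_lt with rfl | hm3
  · exact Ch.no_klein hfree (DihedralGroup.r 1) (DihedralGroup.sr 0) (by decide) (by decide)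
      reflParity indexParity reflParity_mul indexParity_mul rfl rfl rfl rfl
  · refine Ch.no_noncommuting hfree (DihedralGroup.r 1) (DihedralGroup.sr 0) (fun h => ?_)
      (by simp) (fun h => ?_) reflParity reflParity_mul rfl
    · have := congrArg reflParity h
      exact one_ne_zero this
    · simp only [DihedralGroup.r_mul_sr, DihedralGroup.sr_mul_r, DihedralGroup.sr.injEq] at h
      have h2 : ((2 : ℕ) : ZMod m) = 0 := by
        push_cast
        linear_combination -h
      exact absurd (Nat.le_of_dvd two_pos ((ZMod.natCast_eq_zero_iff 2 m).1 h2)) (by omega)
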